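/- arXiv:1908.04496 — 3 statements merged into one kernel-verified Lean document; each statement's English description precedes it below -/
import Mathlib

section
/- Define the effective potential V_eff(q) = V(q₁²+q₂², q₃²+q₄², q₁q₃+q₂q₄) + (1/2)(μ₁² I₁⁻¹ + μ₂² I₂⁻¹), where I₁⁻¹ = (q₁²/ν₂ + q₃²/ν₁)/(4A²) and I₂⁻¹ = (q₂²/ν₂ + q₄²/ν₁)/(4A²), and define c₂(q_i,q_j) = (1/2)·∂²f/∂L₃²(q_i,q_j,0). Then: (i) if q* ∈ ℝ⁴ with A(q*) ≠ 0 is a critical point of V_eff, then (q*, 0) is a critical point of the fully reduced Hamiltonian H; (ii) if moreover the Hessian of V_eff at q* is positive definite and (1/(2ν₁))c₂(q₃*,q₄*) + (1/(2ν₂))c₂(q₁*,q₂*) > 0, then (q*, 0) is a strict local minimum of H. -/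
noncomputable section

/-- `f(q_i, q_j, L₃) = ((L_d + L_s)²q_i² + (L_d − L_s)²q_j²)/(16A²)`,
with `L_d = √(Δ² − L₃²)`, `L_s = √(Σ² − L₃²)`, `Δ = μ₁ − μ₂`, `Σ = μ₁ + μ₂`. -/
def fred (μ₁ μ₂ A qi qj L₃ : ℝ) : ℝ :=
  let Ld := Real.sqrt ((μ₁ - μ₂) ^ 2 - L₃ ^ 2)
  let Ls := Real.sqrt ((μ₁ + μ₂) ^ 2 - L₃ ^ 2)
  ((Ld + Ls) ^ 2 * qi ^ 2 + (Ld - Ls) ^ 2 * qj ^ 2) / (16 * A ^ 2)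

/-- The fully reduced Hamiltonian of the three-body problem in `ℝ⁴` on the phase space
`ℝ⁴ × ℝ⁴` (positions `q`, momenta `p`). -/
def Hred (ν₁ ν₂ μ₁ μ₂ : ℝ) (V : (Fin 3 → ℝ) → ℝ) (z : (Fin 4 → ℝ) × (Fin 4 → ℝ)) : ℝ :=
  let q := z.1; let p := z.2
  let A := (q 0 * q 3 - q 1 * q 2) / 2
  let L₃ := q 0 * p 1 - q 1 * p 0 + q 2 * p 3 - q 3 * p 2
  (1 / (2 * ν₁)) * (p 0 ^ 2 + p 1 ^ 2 + fred μ₁ μ₂ A (q 2) (q 3) L₃) +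
    (1 / (2 * ν₂)) * (p 2 ^ 2 + p 3 ^ 2 + fred μ₁ μ₂ A (q 0) (q 1) L₃) +
    V ![q 0 ^ 2 + q 1 ^ 2, q 2 ^ 2 + q 3 ^ 2, q 0 * q 2 + q 1 * q 3]

/-- The effective potential `V_eff = V + (1/2)(μ₁²I₁⁻¹ + μ₂²I₂⁻¹)`. -/
def Veff (ν₁ ν₂ μ₁ μ₂ : ℝ) (V : (Fin 3 → ℝ) → ℝ) (q : Fin 4 → ℝ) : ℝ :=
  let A := (q 0 * q 3 - q 1 * q 2) / 2
  let I₁inv := ((q 0) ^ 2 / ν₂ + (q 2) ^ 2 / ν₁) / (4 * A ^ 2)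
  let I₂inv := ((q 1) ^ 2 / ν₂ + (q 3) ^ 2 / ν₁) / (4 * A ^ 2)
  V ![q 0 ^ 2 + q 1 ^ 2, q 2 ^ 2 + q 3 ^ 2, q 0 * q 2 + q 1 * q 3] +
    (1 / 2) * (μ₁ ^ 2 * I₁inv + μ₂ ^ 2 * I₂inv)

/-- `c₂(q_i,q_j) = (1/2)·∂²f/∂L₃²(q_i,q_j,0)`. -/
def c2 (μ₁ μ₂ A qi qj : ℝ) : ℝ :=
  (1 / 2) * deriv (deriv fun L₃ => fred μ₁ μ₂ A qi qj L₃) 0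

/-!
Since `f` depends on `L₃` only through `L₃²`, and `f` at `L₃ = 0` turns the rotational terms of `H`
into those of `V_eff`, near `(q*, 0)` one has `H = V_eff(q) + T(p) + L₃² K(q, p)`, with `T` the
quadratic kinetic energy and `K` continuous. As `L₃` vanishes at `p = 0`, the last two terms have
zero derivative there, which gives (i). The value of `K` at `(q*, 0)` is the combination of the `c₂`
in (ii), so in (ii) the last term is nonnegative nearby, `V_eff` has a strict minimum at `q*` by the
second derivative test, and `T` has one at `p = 0`.
-/

open Filter Topology

section Calculus

variable {E : Type*} [NormedAddCommGroup E] [NormedSpace ℝ E]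

lemma deriv_deriv_sq_mul_zero {𝕜 : Type*} [NontriviallyNormedField 𝕜] {k : 𝕜 → 𝕜}
    (hk : ContDiffAt 𝕜 2 k 0) : deriv (deriv fun x => x ^ 2 * k x) 0 = 2 * k 0 := by
  have leibniz := iteratedDeriv_fun_mul (n := 2) (contDiffAt_id.pow 2) hk
  simpa [iteratedDeriv_succ, Finset.sum_range_succ] using leibniz

lemma hasFDerivAt_sq_mul_of_eq_zero {L K : E → ℝ} {x : E} (hL : DifferentiableAt ℝ L x)
    (hLx : L x = 0) (hK : ContinuousAt K x) :
    HasFDerivAt (fun y => L y ^ 2 * K y) (0 : E →L[ℝ] ℝ) x := by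
  have hL_bigO : L =O[𝓝 x] fun y => y - x := by simpa [hLx] using hL.isBigO_sub
  have hLK_littleO : (fun y => L y * K y) =o[𝓝 x] fun _ => (1 : ℝ) := by
    simpa [Asymptotics.isLittleO_one_iff, ContinuousAt, hLx] using hL.continuousAt.fun_mul hK
  refine .of_isLittleO ((hL_bigO.norm_right.mul_isLittleO hLK_littleO).congr (fun y => ?_)
    fun y => mul_one _).of_norm_right
  simp [hLx]
  ring

lemma isCoercive_of_forall_apply_self_pos [FiniteDimensional ℝ E] {B : E →L[ℝ] E →L[ℝ] ℝ}
    (hB : ∀ v, v ≠ 0 → 0 < B v v) : IsCoercive B := by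
  rcases subsingleton_or_nontrivial E with _ | _
  · exact ⟨1, one_pos, fun v => by simp [Subsingleton.elim v 0]⟩
  obtain ⟨u, hu, hmin⟩ := (isCompact_sphere (0 : E) 1).exists_isMinOn
    (NormedSpace.sphere_nonempty.2 zero_le_one) (f := fun v => B v v) (by fun_prop)
  refine ⟨B u u, hB u (ne_zero_of_mem_unit_sphere ⟨u, hu⟩), fun v => ?_⟩
  rcases eq_or_ne v 0 with rfl | hv
  · simp
  have hnorm : 0 < ‖v‖ := norm_pos_iff.2 hv
  have hunit : B u u ≤ ‖v‖⁻¹ * (‖v‖⁻¹ * B v v) := by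
    simpa using hmin (show ‖v‖⁻¹ • v ∈ Metric.sphere (0 : E) 1 by simp [norm_smul, hnorm.ne'])
  calc B u u * ‖v‖ * ‖v‖ ≤ ‖v‖⁻¹ * (‖v‖⁻¹ * B v v) * ‖v‖ * ‖v‖ := by gcongr
    _ = B v v := by field_simp

lemma hasDerivAt_comp_add_smul {g : E → ℝ} {x v : E} {t : ℝ}
    (hg : DifferentiableAt ℝ g (x + t • v)) :
    HasDerivAt (fun s : ℝ => g (x + s • v)) (fderiv ℝ g (x + t • v) v) t := by
  have hline : HasDerivAt (fun s : ℝ => x + s • v) v t := by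
    simpa using ((hasDerivAt_id t).smul_const v).const_add x
  exact hg.hasFDerivAt.comp_hasDerivAt t hline

lemma eventually_lt_of_eventually_fderiv_sub_pos {g : E → ℝ} {x : E} (hg : ContinuousAt g x)
    (hpos : ∀ᶠ y in 𝓝[≠] x, 0 < fderiv ℝ g y (y - x)) : ∀ᶠ y in 𝓝[≠] x, g x < g y := by
  rw [eventually_nhdsWithin_iff] at hpos ⊢
  obtain ⟨r, hr, hball⟩ := Metric.eventually_nhds_iff_ball.1 hpos
  filter_upwards [Metric.ball_mem_nhds x hr] with y hy hyx
  have hray : ∀ t ∈ Set.Ioc (0 : ℝ) 1, 0 < fderiv ℝ g (x + t • (y - x)) (y - x) := by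
    intro t ht
    have hmem : x + t • (y - x) ∈ Metric.ball x r := by
      rw [Metric.mem_ball, dist_eq_norm] at hy ⊢
      rw [add_sub_cancel_left, norm_smul, Real.norm_of_nonneg ht.1.le]
      exact (mul_le_of_le_one_left (norm_nonneg _) ht.2).trans_lt hy
    have hne : x + t • (y - x) ≠ x := by simpa [sub_eq_zero, ht.1.ne'] using hyx
    have hscaled := hball _ hmem hne
    rw [add_sub_cancel_left, map_smul, smul_eq_mul] at hscaled
    exact pos_of_mul_pos_right hscaled ht.1.le
  have hderiv : ∀ t ∈ Set.Ioc (0 : ℝ) 1, HasDerivAt (fun s : ℝ => g (x + s • (y - x)))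
      (fderiv ℝ g (x + t • (y - x)) (y - x)) t := fun t ht =>
    hasDerivAt_comp_add_smul <| by
      by_contra hnot
      simpa [fderiv_zero_of_not_differentiableAt hnot] using hray t ht
  have hcont : ContinuousOn (fun s : ℝ => g (x + s • (y - x))) (Set.Icc 0 1) := by
    intro t ht
    rcases ht.1.eq_or_lt with rfl | ht0
    · refine ContinuousAt.continuousWithinAt (ContinuousAt.comp (by simpa using hg) (by fun_prop))
    · exact (hderiv t ⟨ht0, ht.2⟩).continuousAt.continuousWithinAt
  have hmono := strictMonoOn_of_deriv_pos (convex_Icc 0 1) hcont fun t ht => by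
    have ht' := Set.Ioo_subset_Ioc_self (interior_Icc.subset ht)
    exact (hderiv t ht').deriv ▸ hray t ht'
  simpa using hmono (Set.left_mem_Icc.2 zero_le_one) (Set.right_mem_Icc.2 zero_le_one) zero_lt_one

theorem eventually_lt_of_isCoercive {g : E → ℝ} {x : E} {B : E →L[ℝ] E →L[ℝ] ℝ}
    (hg : ContinuousAt g x) (hcrit : fderiv ℝ g x = 0) (hB : HasFDerivAt (fderiv ℝ g) B x)
    (hcoer : IsCoercive B) : ∀ᶠ y in 𝓝[≠] x, g x < g y := by
  obtain ⟨m, hm, hmB⟩ := hcoer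
  refine eventually_lt_of_eventually_fderiv_sub_pos hg ?_
  rw [eventually_nhdsWithin_iff]
  filter_upwards [hB.isLittleO.def (half_pos hm)] with y hy hyx
  set v := y - x
  have hv : 0 < ‖v‖ := norm_pos_iff.2 (sub_ne_zero.2 hyx)
  rw [hcrit, sub_zero] at hy
  have hremainder : |fderiv ℝ g y v - B v v| ≤ m / 2 * ‖v‖ * ‖v‖ :=
    (fderiv ℝ g y - B v).le_of_opNorm_le hy v
  have hgap : 0 < m * ‖v‖ * ‖v‖ := by positivity
  linarith [(abs_le.1 hremainder).1, hmB v]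

lemma differentiableAt_of_forall_clm_apply {F G : Type*} [NormedAddCommGroup F] [NormedSpace ℝ F]
    [FiniteDimensional ℝ F] [NormedAddCommGroup G] [NormedSpace ℝ G] {f : E → F →L[ℝ] G} {x : E}
    (hf : ∀ v, DifferentiableAt ℝ (fun y => f y v) x) : DifferentiableAt ℝ f x := by
  let coords := (Module.finBasis ℝ F).equivFunL
  let values : (F →L[ℝ] G) ≃L[ℝ] (Fin (Module.finrank ℝ F) → G) :=
    (coords.arrowCongr (.refl ℝ G)).trans (ContinuousLinearEquiv.piRing _)
  rw [← values.comp_differentiableAt_iff]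
  exact differentiableAt_pi.2 fun i => hf _

lemma differentiableAt_fderiv_of_hessian_pos [FiniteDimensional ℝ E] {g : E → ℝ} {x : E}
    (hpos : ∀ v, v ≠ 0 → 0 < fderiv ℝ (fun y => fderiv ℝ g y v) x v) :
    DifferentiableAt ℝ (fderiv ℝ g) x := by
  refine differentiableAt_of_forall_clm_apply fun v => ?_
  rcases eq_or_ne v 0 with rfl | hv
  · simp
  -- `fderiv` vanishes where the derivative does not exist, so its positivity carries existence.
  by_contra hnot
  simpa [fderiv_zero_of_not_differentiableAt hnot] using hpos v hv

theorem eventually_lt_of_hessian_pos [FiniteDimensional ℝ E] {g : E → ℝ} {x : E}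
    (hg : ContinuousAt g x) (hcrit : fderiv ℝ g x = 0)
    (hpos : ∀ v, v ≠ 0 → 0 < fderiv ℝ (fun y => fderiv ℝ g y v) x v) :
    ∀ᶠ y in 𝓝[≠] x, g x < g y := by
  have hdiff := differentiableAt_fderiv_of_hessian_pos hpos
  refine eventually_lt_of_isCoercive hg hcrit hdiff.hasFDerivAt
    (isCoercive_of_forall_apply_self_pos fun v hv => ?_)
  simpa [fderiv_clm_apply hdiff (differentiableAt_const v)] using hpos v hv

end Calculus

section Reduction

variable {μ₁ μ₂ : ℝ}

/-- The product `L_d L_s`, under a single square root; the two agree when `|L₃| ≤ Δ` and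
`|L₃| ≤ Σ`. -/
def sqrtProd (μ₁ μ₂ L : ℝ) : ℝ :=
  √(((μ₁ - μ₂) ^ 2 - L ^ 2) * ((μ₁ + μ₂) ^ 2 - L ^ 2))

/-- The quotient `(L_d L_s - (μ₁² - μ₂²)) / L₃²`, rationalized by the conjugate of its numerator so
that it is smooth at `L₃ = 0`. -/
def sqrtProdSlope (μ₁ μ₂ L : ℝ) : ℝ :=
  (L ^ 2 - 2 * (μ₁ ^ 2 + μ₂ ^ 2)) / (sqrtProd μ₁ μ₂ L + (μ₁ ^ 2 - μ₂ ^ 2))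

/-- The quotient `(f(L₃) - f(0)) / L₃²`, extended smoothly to `L₃ = 0`. -/
def fredSlope (μ₁ μ₂ A qi qj L : ℝ) : ℝ :=
  ((qi ^ 2 - qj ^ 2) * sqrtProdSlope μ₁ μ₂ L - (qi ^ 2 + qj ^ 2)) / (8 * A ^ 2)

lemma sqrtProd_zero (hμ : μ₂ ^ 2 < μ₁ ^ 2) : sqrtProd μ₁ μ₂ 0 = μ₁ ^ 2 - μ₂ ^ 2 := by
  have hsq : ((μ₁ - μ₂) ^ 2 - 0 ^ 2) * ((μ₁ + μ₂) ^ 2 - 0 ^ 2) = (μ₁ ^ 2 - μ₂ ^ 2) ^ 2 := by ring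
  rw [sqrtProd, hsq, Real.sqrt_sq (sub_nonneg.2 hμ.le)]

lemma sqrtProd_eq {L : ℝ} (hμ : μ₂ ^ 2 < μ₁ ^ 2) (hd : L ^ 2 ≤ (μ₁ - μ₂) ^ 2)
    (hs : L ^ 2 ≤ (μ₁ + μ₂) ^ 2) :
    sqrtProd μ₁ μ₂ L = μ₁ ^ 2 - μ₂ ^ 2 + L ^ 2 * sqrtProdSlope μ₁ μ₂ L := by
  have hden : 0 < sqrtProd μ₁ μ₂ L + (μ₁ ^ 2 - μ₂ ^ 2) :=
    add_pos_of_nonneg_of_pos (Real.sqrt_nonneg _) (sub_pos.2 hμ)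
  have hsq : sqrtProd μ₁ μ₂ L ^ 2 = ((μ₁ - μ₂) ^ 2 - L ^ 2) * ((μ₁ + μ₂) ^ 2 - L ^ 2) :=
    Real.sq_sqrt (mul_nonneg (sub_nonneg.2 hd) (sub_nonneg.2 hs))
  rw [sqrtProdSlope]
  field_simp
  linear_combination hsq

lemma fred_eq_sqrtProd {L : ℝ} (A qi qj : ℝ) (hd : L ^ 2 ≤ (μ₁ - μ₂) ^ 2)
    (hs : L ^ 2 ≤ (μ₁ + μ₂) ^ 2) :
    fred μ₁ μ₂ A qi qj L = ((μ₁ ^ 2 + μ₂ ^ 2 - L ^ 2) * (qi ^ 2 + qj ^ 2) +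
      sqrtProd μ₁ μ₂ L * (qi ^ 2 - qj ^ 2)) / (8 * A ^ 2) := by
  have hd_sq := Real.sq_sqrt (sub_nonneg.2 hd)
  have hs_sq := Real.sq_sqrt (sub_nonneg.2 hs)
  rw [fred, sqrtProd, Real.sqrt_mul (sub_nonneg.2 hd)]
  linear_combination (qi ^ 2 + qj ^ 2) / (16 * A ^ 2) * (hd_sq + hs_sq)

lemma fred_zero (hμ : μ₂ ^ 2 < μ₁ ^ 2) (A qi qj : ℝ) :
    fred μ₁ μ₂ A qi qj 0 = (μ₁ ^ 2 * qi ^ 2 + μ₂ ^ 2 * qj ^ 2) / (4 * A ^ 2) := by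
  rw [fred_eq_sqrtProd A qi qj (by simp [sq_nonneg]) (by simp [sq_nonneg]), sqrtProd_zero hμ]
  ring

lemma fred_eq_add_sq_mul {L : ℝ} (hμ : μ₂ ^ 2 < μ₁ ^ 2) (A qi qj : ℝ)
    (hd : L ^ 2 ≤ (μ₁ - μ₂) ^ 2) (hs : L ^ 2 ≤ (μ₁ + μ₂) ^ 2) :
    fred μ₁ μ₂ A qi qj L = fred μ₁ μ₂ A qi qj 0 + L ^ 2 * fredSlope μ₁ μ₂ A qi qj L := by
  rw [fred_eq_sqrtProd A qi qj hd hs, sqrtProd_eq hμ hd hs, fred_zero hμ, fredSlope]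
  ring

lemma eventually_fred_eq (hμ : μ₂ ^ 2 < μ₁ ^ 2) : ∀ᶠ L in 𝓝 (0 : ℝ), ∀ A qi qj,
    fred μ₁ μ₂ A qi qj L = fred μ₁ μ₂ A qi qj 0 + L ^ 2 * fredSlope μ₁ μ₂ A qi qj L := by
  have hprod : 0 < (μ₁ - μ₂) * (μ₁ + μ₂) := by linarith
  have hsq : ∀ {a : ℝ}, a ≠ 0 → ∀ᶠ L in 𝓝 (0 : ℝ), L ^ 2 ≤ a ^ 2 := fun {a} ha =>
    ((continuous_pow 2).tendsto' 0 0 (by simp)).eventually_le_const (by positivity)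
  filter_upwards [hsq (left_ne_zero_of_mul hprod.ne'), hsq (right_ne_zero_of_mul hprod.ne')]
    with L hd hs A qi qj using fred_eq_add_sq_mul hμ A qi qj hd hs

lemma contDiffAt_sqrtProdSlope {n : WithTop ℕ∞} (hμ : μ₂ ^ 2 < μ₁ ^ 2) :
    ContDiffAt ℝ n (sqrtProdSlope μ₁ μ₂) 0 := by
  have hprod : 0 < sqrtProd μ₁ μ₂ 0 := by
    rw [sqrtProd_zero hμ]
    exact sub_pos.2 hμ
  have hsqrt : ContDiffAt ℝ n (sqrtProd μ₁ μ₂) 0 :=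
    ContDiffAt.sqrt (by fun_prop) (Real.sqrt_pos.1 hprod).ne'
  exact ContDiffAt.div (by fun_prop) (by fun_prop) (add_pos hprod (sub_pos.2 hμ)).ne'

lemma contDiffAt_fredSlope {n : WithTop ℕ∞} (hμ : μ₂ ^ 2 < μ₁ ^ 2) (A qi qj : ℝ) :
    ContDiffAt ℝ n (fredSlope μ₁ μ₂ A qi qj) 0 := by
  have hslope : ContDiffAt ℝ n (sqrtProdSlope μ₁ μ₂) 0 := contDiffAt_sqrtProdSlope hμ
  unfold fredSlope
  fun_prop

lemma c2_eq_fredSlope_zero (hμ : μ₂ ^ 2 < μ₁ ^ 2) (A qi qj : ℝ) :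
    c2 μ₁ μ₂ A qi qj = fredSlope μ₁ μ₂ A qi qj 0 := by
  have hfred : fred μ₁ μ₂ A qi qj =ᶠ[𝓝 0]
      fun L => fred μ₁ μ₂ A qi qj 0 + L ^ 2 * fredSlope μ₁ μ₂ A qi qj L :=
    (eventually_fred_eq hμ).mono fun L hL => hL A qi qj
  rw [c2, hfred.deriv.deriv_eq, deriv_const_add',
    deriv_deriv_sq_mul_zero (contDiffAt_fredSlope hμ A qi qj)]
  ring

/-- The signed area `A` of the triangle with configuration `q`. -/
def area (q : Fin 4 → ℝ) : ℝ :=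
  (q 0 * q 3 - q 1 * q 2) / 2

/-- The angular momentum `L₃` at `z = (q, p)`. -/
def angularMomentum (z : (Fin 4 → ℝ) × (Fin 4 → ℝ)) : ℝ :=
  z.1 0 * z.2 1 - z.1 1 * z.2 0 + z.1 2 * z.2 3 - z.1 3 * z.2 2

/-- The part `T` of the kinetic energy in `H` that is quadratic in the momenta `p`. -/
def kineticEnergy (ν₁ ν₂ : ℝ) (p : Fin 4 → ℝ) : ℝ :=
  1 / (2 * ν₁) * (p 0 ^ 2 + p 1 ^ 2) + 1 / (2 * ν₂) * (p 2 ^ 2 + p 3 ^ 2)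

/-- The coefficient of `L₃²` in the reduced Hamiltonian; it depends on `L₃` itself but is continuous
at `L₃ = 0`. -/
def angularCoeff (ν₁ ν₂ μ₁ μ₂ : ℝ) (z : (Fin 4 → ℝ) × (Fin 4 → ℝ)) : ℝ :=
  1 / (2 * ν₁) * fredSlope μ₁ μ₂ (area z.1) (z.1 2) (z.1 3) (angularMomentum z) +
    1 / (2 * ν₂) * fredSlope μ₁ μ₂ (area z.1) (z.1 0) (z.1 1) (angularMomentum z)

variable {ν₁ ν₂ : ℝ} {V : (Fin 3 → ℝ) → ℝ} {q : Fin 4 → ℝ}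

lemma differentiableAt_Veff (hA : area q ≠ 0)
    (hV : DifferentiableAt ℝ V ![q 0 ^ 2 + q 1 ^ 2, q 2 ^ 2 + q 3 ^ 2, q 0 * q 2 + q 1 * q 3]) :
    DifferentiableAt ℝ (Veff ν₁ ν₂ μ₁ μ₂ V) q := by
  have hpair : DifferentiableAt ℝ (fun q : Fin 4 → ℝ =>
      V ![q 0 ^ 2 + q 1 ^ 2, q 2 ^ 2 + q 3 ^ 2, q 0 * q 2 + q 1 * q 3]) q := by
    refine DifferentiableAt.fun_comp' q hV (differentiableAt_pi.2 fun i => ?_)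
    fin_cases i <;> dsimp <;> fun_prop
  have hden : 4 * ((q 0 * q 3 - q 1 * q 2) / 2) ^ 2 ≠ 0 :=
    mul_ne_zero four_ne_zero (pow_ne_zero 2 hA)
  refine hpair.add ?_
  fun_prop (disch := exact hden)

lemma angularMomentum_zero_right (q : Fin 4 → ℝ) : angularMomentum (q, 0) = 0 := by
  simp [angularMomentum]

lemma differentiable_angularMomentum : Differentiable ℝ angularMomentum := by
  unfold angularMomentum
  fun_prop

lemma kineticEnergy_zero : kineticEnergy ν₁ ν₂ 0 = 0 := by
  simp [kineticEnergy]

lemma kineticEnergy_pos (hν₁ : 0 < ν₁) (hν₂ : 0 < ν₂) {p : Fin 4 → ℝ} (hp : p ≠ 0) :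
    0 < kineticEnergy ν₁ ν₂ p := by
  obtain ⟨i, hi⟩ := Function.ne_iff.1 hp
  have hi_sq : 0 < p i ^ 2 := sq_pos_of_ne_zero hi
  unfold kineticEnergy
  fin_cases i <;> dsimp at hi_sq <;> positivity

lemma hasFDerivAt_kineticEnergy_zero :
    HasFDerivAt (kineticEnergy ν₁ ν₂) (0 : (Fin 4 → ℝ) →L[ℝ] ℝ) 0 := by
  have hsq : ∀ i, HasFDerivAt (fun p : Fin 4 → ℝ => p i ^ 2) (0 : (Fin 4 → ℝ) →L[ℝ] ℝ) 0 := by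
    intro i
    simpa using ((hasFDerivAt_apply (𝕜 := ℝ) i (0 : Fin 4 → ℝ)).pow 2)
  exact ((((hsq 0).add (hsq 1)).const_mul (1 / (2 * ν₁))).add
    (((hsq 2).add (hsq 3)).const_mul (1 / (2 * ν₂)))).congr_fderiv (by simp)

lemma angularCoeff_zero_right (hμ : μ₂ ^ 2 < μ₁ ^ 2) (q : Fin 4 → ℝ) :
    angularCoeff ν₁ ν₂ μ₁ μ₂ (q, 0) =
      1 / (2 * ν₁) * c2 μ₁ μ₂ (area q) (q 2) (q 3) +
        1 / (2 * ν₂) * c2 μ₁ μ₂ (area q) (q 0) (q 1) := by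
  simp only [angularCoeff, angularMomentum_zero_right, c2_eq_fredSlope_zero hμ]

lemma continuousAt_angularCoeff (hμ : μ₂ ^ 2 < μ₁ ^ 2) (hA : area q ≠ 0) :
    ContinuousAt (angularCoeff ν₁ ν₂ μ₁ μ₂) (q, 0) := by
  have hL : Continuous angularMomentum := differentiable_angularMomentum.continuous
  have harea : Continuous area := by
    unfold area
    fun_prop
  have hslope : ContinuousAt (fun z => sqrtProdSlope μ₁ μ₂ (angularMomentum z)) (q, 0) := by
    have hslope_zero : ContinuousAt (sqrtProdSlope μ₁ μ₂) (angularMomentum (q, 0)) := by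
      rw [angularMomentum_zero_right]
      exact (contDiffAt_sqrtProdSlope (n := 0) hμ).continuousAt
    exact hslope_zero.comp hL.continuousAt
  have hden : 8 * area q ^ 2 ≠ 0 := by positivity
  unfold angularCoeff fredSlope
  fun_prop (disch := exact hden)

lemma eventually_Hred_eq (hμ : μ₂ ^ 2 < μ₁ ^ 2) (q : Fin 4 → ℝ) :
    ∀ᶠ z in 𝓝 (q, (0 : Fin 4 → ℝ)), Hred ν₁ ν₂ μ₁ μ₂ V z =
      Veff ν₁ ν₂ μ₁ μ₂ V z.1 + kineticEnergy ν₁ ν₂ z.2 +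
        angularMomentum z ^ 2 * angularCoeff ν₁ ν₂ μ₁ μ₂ z := by
  have hL : Tendsto angularMomentum (𝓝 (q, (0 : Fin 4 → ℝ))) (𝓝 0) :=
    differentiable_angularMomentum.continuous.tendsto' _ _ (angularMomentum_zero_right q)
  filter_upwards [hL.eventually (eventually_fred_eq hμ)] with z hz
  have hH : Hred ν₁ ν₂ μ₁ μ₂ V z =
      1 / (2 * ν₁) * (z.2 0 ^ 2 + z.2 1 ^ 2 +
        fred μ₁ μ₂ (area z.1) (z.1 2) (z.1 3) (angularMomentum z)) +
      1 / (2 * ν₂) * (z.2 2 ^ 2 + z.2 3 ^ 2 +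
        fred μ₁ μ₂ (area z.1) (z.1 0) (z.1 1) (angularMomentum z)) +
      V ![z.1 0 ^ 2 + z.1 1 ^ 2, z.1 2 ^ 2 + z.1 3 ^ 2, z.1 0 * z.1 2 + z.1 1 * z.1 3] := rfl
  rw [hH, hz, hz, fred_zero hμ, fred_zero hμ, Veff, kineticEnergy, angularCoeff, area]
  ring

theorem hasFDerivAt_Hred_zero_right (hμ : μ₂ ^ 2 < μ₁ ^ 2) (hA : area q ≠ 0)
    (hcrit : HasFDerivAt (Veff ν₁ ν₂ μ₁ μ₂ V) (0 : (Fin 4 → ℝ) →L[ℝ] ℝ) q) :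
    HasFDerivAt (Hred ν₁ ν₂ μ₁ μ₂ V) (0 : (Fin 4 → ℝ) × (Fin 4 → ℝ) →L[ℝ] ℝ) (q, 0) := by
  have hVeff := hcrit.comp (f := Prod.fst) (q, (0 : Fin 4 → ℝ)) hasFDerivAt_fst
  have hkinetic := (hasFDerivAt_kineticEnergy_zero (ν₁ := ν₁) (ν₂ := ν₂)).comp
    (f := Prod.snd) (q, (0 : Fin 4 → ℝ)) hasFDerivAt_snd
  have hangular := hasFDerivAt_sq_mul_of_eq_zero
    differentiable_angularMomentum.differentiableAt (angularMomentum_zero_right q)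
    (continuousAt_angularCoeff (ν₁ := ν₁) (ν₂ := ν₂) hμ hA)
  refine ((hVeff.add hkinetic).add hangular).congr_of_eventuallyEq (eventually_Hred_eq hμ q)
    |>.congr_fderiv ?_
  simp

theorem eventually_Hred_lt (hν₁ : 0 < ν₁) (hν₂ : 0 < ν₂) (hμ : μ₂ ^ 2 < μ₁ ^ 2)
    (hA : area q ≠ 0)
    (hmin : ∀ᶠ y in 𝓝[≠] q, Veff ν₁ ν₂ μ₁ μ₂ V q < Veff ν₁ ν₂ μ₁ μ₂ V y)
    (hcoeff : 0 < angularCoeff ν₁ ν₂ μ₁ μ₂ (q, 0)) :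
    ∀ᶠ z in 𝓝[≠] (q, (0 : Fin 4 → ℝ)),
      Hred ν₁ ν₂ μ₁ μ₂ V (q, 0) < Hred ν₁ ν₂ μ₁ μ₂ V z := by
  have hH := eventually_Hred_eq (ν₁ := ν₁) (ν₂ := ν₂) (V := V) hμ q
  have hcoeff_near := (continuousAt_angularCoeff hμ hA).eventually_const_lt hcoeff
  have hmin_near := (continuous_fst.tendsto (q, (0 : Fin 4 → ℝ))).eventually
    (eventually_nhdsWithin_iff.1 hmin)
  have hH_base : Hred ν₁ ν₂ μ₁ μ₂ V (q, 0) = Veff ν₁ ν₂ μ₁ μ₂ V q := by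
    simpa [kineticEnergy_zero, angularMomentum_zero_right] using hH.self_of_nhds
  rw [eventually_nhdsWithin_iff]
  filter_upwards [hH, hcoeff_near, hmin_near] with z hHz hKz hVz hz
  rw [hH_base, hHz]
  have hangular : 0 ≤ angularMomentum z ^ 2 * angularCoeff ν₁ ν₂ μ₁ μ₂ z := by positivity
  rcases eq_or_ne z.2 0 with hp | hp
  · have hq : z.1 ≠ q := fun hq => hz (Prod.ext hq hp)
    rw [hp, kineticEnergy_zero]
    linarith [hVz hq]
  · have hVle : Veff ν₁ ν₂ μ₁ μ₂ V q ≤ Veff ν₁ ν₂ μ₁ μ₂ V z.1 := by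
      rcases eq_or_ne z.1 q with hq | hq
      · rw [hq]
      · exact (hVz hq).le
    linarith [kineticEnergy_pos hν₁ hν₂ hp]

theorem Veff_critical_min_general (hν₁ : 0 < ν₁) (hν₂ : 0 < ν₂) (hμ : μ₂ ^ 2 < μ₁ ^ 2)
    (hA : area q ≠ 0)
    (hcrit : HasFDerivAt (Veff ν₁ ν₂ μ₁ μ₂ V) (0 : (Fin 4 → ℝ) →L[ℝ] ℝ) q) :
    HasFDerivAt (Hred ν₁ ν₂ μ₁ μ₂ V) (0 : (Fin 4 → ℝ) × (Fin 4 → ℝ) →L[ℝ] ℝ) (q, 0) ∧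
    ((∀ v, v ≠ 0 → 0 < fderiv ℝ (fun y => fderiv ℝ (Veff ν₁ ν₂ μ₁ μ₂ V) y v) q v) →
      0 < 1 / (2 * ν₁) * c2 μ₁ μ₂ (area q) (q 2) (q 3) +
          1 / (2 * ν₂) * c2 μ₁ μ₂ (area q) (q 0) (q 1) →
      ∀ᶠ z in 𝓝[≠] (q, (0 : Fin 4 → ℝ)),
        Hred ν₁ ν₂ μ₁ μ₂ V (q, 0) < Hred ν₁ ν₂ μ₁ μ₂ V z) := by
  refine ⟨hasFDerivAt_Hred_zero_right hμ hA hcrit, fun hhess hc2 => ?_⟩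
  have hmin := eventually_lt_of_hessian_pos hcrit.continuousAt hcrit.fderiv hhess
  exact eventually_Hred_lt hν₁ hν₂ hμ hA hmin (angularCoeff_zero_right hμ q ▸ hc2)

end Reduction

/-- (i) A critical point `q*` of `V_eff` (with `A(q*) ≠ 0`) gives a critical point
`(q*,0)` of the fully reduced Hamiltonian `H`; (ii) if moreover the Hessian of `V_eff`
at `q*` is positive definite and `(1/(2ν₁))c₂(q₃*,q₄*) + (1/(2ν₂))c₂(q₁*,q₂*) > 0`,
then `(q*,0)` is a strict local minimum of `H`. -/
theorem Veff_critical_min (ν₁ ν₂ μ₁ μ₂ : ℝ) (hν₁ : 0 < ν₁) (hν₂ : 0 < ν₂)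
    (hμ : μ₁ > μ₂) (hμ₂ : 0 ≤ μ₂) (V : (Fin 3 → ℝ) → ℝ) (hV : ContDiff ℝ 2 V)
    (qstar : Fin 4 → ℝ) (hA : (qstar 0 * qstar 3 - qstar 1 * qstar 2) / 2 ≠ 0)
    (hcrit : fderiv ℝ (Veff ν₁ ν₂ μ₁ μ₂ V) qstar = 0) :
    fderiv ℝ (Hred ν₁ ν₂ μ₁ μ₂ V) (qstar, (0 : Fin 4 → ℝ)) = 0 ∧
    ((∀ v : Fin 4 → ℝ, v ≠ 0 →
        0 < fderiv ℝ (fun q => fderiv ℝ (Veff ν₁ ν₂ μ₁ μ₂ V) q v) qstar v) →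
      0 < (1 / (2 * ν₁)) *
            c2 μ₁ μ₂ ((qstar 0 * qstar 3 - qstar 1 * qstar 2) / 2) (qstar 2) (qstar 3) +
          (1 / (2 * ν₂)) *
            c2 μ₁ μ₂ ((qstar 0 * qstar 3 - qstar 1 * qstar 2) / 2) (qstar 0) (qstar 1) →
      ∀ᶠ z in nhdsWithin (qstar, (0 : Fin 4 → ℝ)) {(qstar, (0 : Fin 4 → ℝ))}ᶜ,
        Hred ν₁ ν₂ μ₁ μ₂ V (qstar, (0 : Fin 4 → ℝ)) < Hred ν₁ ν₂ μ₁ μ₂ V z) := by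
  have hVeff : HasFDerivAt (Veff ν₁ ν₂ μ₁ μ₂ V) (0 : (Fin 4 → ℝ) →L[ℝ] ℝ) qstar :=
    hcrit ▸ (differentiableAt_Veff hA (hV.differentiable two_ne_zero _)).hasFDerivAt
  exact (Veff_critical_min_general hν₁ hν₂ (pow_lt_pow_left₀ hμ hμ₂ two_ne_zero) hA hVeff).imp_left
    HasFDerivAt.fderiv

end
end

section
/- Let m₂ = m₃ = m > 0, m₁ > 0 and μ₁ > μ₂ > 0. Then there exist q₁, q₄ > 0 satisfying the two equations m²/q₁² + 4mm₁q₁/(q₁²+4q₄²)^{3/2} − μ₂²/(ν₁q₁³) = 0 and 16mm₁q₄/(q₁²+4q₄²)^{3/2} − μ₁²/(ν₂q₄³) = 0; and for any q₁, q₄ > 0 satisfying these two equations, the point with coordinates (q₁, q₂, q₃, q₄) = (q₁, 0, 0, q₄) and momenta p₁ = p₂ = p₃ = p₄ = 0 is a critical point of the fully reduced Hamiltonian H (so the corresponding isosceles triangle is a relative equilibrium of the three-body problem in ℝ⁴). -/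
noncomputable section

/-- The Newtonian potential of the three-body problem in the translation-reduced
variables: `V(s₁,s₂,s₃) = −m₂m₃/√s₁ − m₃m₁/√(a₂²s₁+s₂+2a₂s₃) − m₁m₂/√(a₃²s₁+s₂−2a₃s₃)`
with `a₂ = m₂/(m₂+m₃)`, `a₃ = m₃/(m₂+m₃)`. -/
def Vnewt (m₁ m₂ m₃ : ℝ) (s : Fin 3 → ℝ) : ℝ :=
  -(m₂ * m₃ / Real.sqrt (s 0)) -
    m₃ * m₁ / Real.sqrt ((m₂ / (m₂ + m₃)) ^ 2 * s 0 + s 1 + 2 * (m₂ / (m₂ + m₃)) * s 2) -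
    m₁ * m₂ / Real.sqrt ((m₃ / (m₂ + m₃)) ^ 2 * s 0 + s 1 - 2 * (m₃ / (m₂ + m₃)) * s 2)

/-! At `p = 0` the momentum `L₃` vanishes and enters `H` only through its square, so to first order
`f(qᵢ, qⱼ, L₃)` is `(μ₁²qᵢ² + μ₂²qⱼ²)/(4A²)`. Equal masses make the two distances to the first body
agree when `q₂ = q₃ = 0`, which kills the derivative of `V` in `s₃`. What remains of `dH` are its
coefficients at `dq₁` and `dq₄`, the left-hand sides of the two equations. For existence,
eliminating the scale turns the equations into `a u³ + b = (u² - 1)²` for the ratio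
`u = √(q₁² + 4q₄²)/q₁`, which has a root `u > 1` by the intermediate value theorem. -/

lemma sq_rpow_three_halves {r : ℝ} (hr : 0 ≤ r) : (r ^ 2) ^ ((3 : ℝ) / 2) = r ^ 3 := by
  rw [← Real.rpow_natCast_mul hr, ← Real.rpow_natCast]
  norm_num

section

variable {E : Type*} [NormedAddCommGroup E] [NormedSpace ℝ E] {x : E}

lemma hasFDerivAt_const_div_sqrt {g : E → ℝ} {g' : E →L[ℝ] ℝ} (c : ℝ)
    (hg : HasFDerivAt g g' x) (hx : 0 < g x) :
    HasFDerivAt (fun y ↦ c / √(g y)) (-(c / (2 * g x ^ ((3 : ℝ) / 2))) • g') x := by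
  have hsqrt : 0 < √(g x) := Real.sqrt_pos.mpr hx
  have hpow : g x ^ ((3 : ℝ) / 2) = √(g x) ^ 3 := by
    rw [← sq_rpow_three_halves hsqrt.le, Real.sq_sqrt hx.le]
  have hinv : HasDerivAt (fun s ↦ c / √s) (-(c / (2 * g x ^ ((3 : ℝ) / 2)))) (g x) := by
    refine ((hasDerivAt_const (g x) c).div (Real.hasDerivAt_sqrt hx.ne') hsqrt.ne').congr_deriv ?_
    rw [hpow]
    field_simp
    ring
  exact hinv.comp_hasFDerivAt x hg

lemma hasFDerivAt_sqrt_sq_sub_sq {L : E → ℝ} {c : ℝ} (hc : c ≠ 0)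
    (hL : DifferentiableAt ℝ L x) (hLx : L x = 0) :
    HasFDerivAt (fun y ↦ √(c ^ 2 - L y ^ 2)) (0 : E →L[ℝ] ℝ) x := by
  have hsq : HasFDerivAt (fun y ↦ c ^ 2 - L y ^ 2) (0 : E →L[ℝ] ℝ) x := by
    simpa [hLx] using (hL.hasFDerivAt.pow 2).const_sub (c ^ 2)
  simpa using hsq.sqrt (by simpa [hLx] using hc)

-- At `L = 0` one has `L_d + L_s = 2μ₁` and `L_d - L_s = -2μ₂`, both stationary in `L`.
lemma hasFDerivAt_fred {μ₁ μ₂ : ℝ} (hμ : |μ₂| < μ₁) {A qi qj L : E → ℝ}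
    {A' qi' qj' : E →L[ℝ] ℝ} (hA : HasFDerivAt A A' x) (hqi : HasFDerivAt qi qi' x)
    (hqj : HasFDerivAt qj qj' x) (hL : DifferentiableAt ℝ L x) (hLx : L x = 0) (hAx : A x ≠ 0) :
    HasFDerivAt (fun y ↦ fred μ₁ μ₂ (A y) (qi y) (qj y) (L y))
      ((μ₁ ^ 2 * qi x / (2 * A x ^ 2)) • qi' + (μ₂ ^ 2 * qj x / (2 * A x ^ 2)) • qj' -
        ((μ₁ ^ 2 * qi x ^ 2 + μ₂ ^ 2 * qj x ^ 2) / (2 * A x ^ 3)) • A') x := by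
  obtain ⟨hneg, hpos⟩ := abs_lt.mp hμ
  have hdiff : 0 < μ₁ - μ₂ := by linarith
  have hsum : 0 < μ₁ + μ₂ := by linarith
  have hLd := hasFDerivAt_sqrt_sq_sub_sq hdiff.ne' hL hLx
  have hLs := hasFDerivAt_sqrt_sq_sub_sq hsum.ne' hL hLx
  have hLdx : √((μ₁ - μ₂) ^ 2 - L x ^ 2) = μ₁ - μ₂ := by simp [hLx, Real.sqrt_sq hdiff.le]
  have hLsx : √((μ₁ + μ₂) ^ 2 - L x ^ 2) = μ₁ + μ₂ := by simp [hLx, Real.sqrt_sq hsum.le]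
  have hnum : HasFDerivAt (fun y ↦
      (√((μ₁ - μ₂) ^ 2 - L y ^ 2) + √((μ₁ + μ₂) ^ 2 - L y ^ 2)) ^ 2 * qi y ^ 2 +
        (√((μ₁ - μ₂) ^ 2 - L y ^ 2) - √((μ₁ + μ₂) ^ 2 - L y ^ 2)) ^ 2 * qj y ^ 2)
      ((8 * μ₁ ^ 2 * qi x) • qi' + (8 * μ₂ ^ 2 * qj x) • qj') x := by
    refine ((((hLd.add hLs).pow 2).mul (hqi.pow 2)).add
      (((hLd.sub hLs).pow 2).mul (hqj.pow 2))).congr_fderiv ?_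
    simp only [Pi.add_apply, Pi.sub_apply, hLdx, hLsx, add_zero, sub_self, smul_zero]
    module
  have hden : HasFDerivAt (fun y ↦ (16 * A y ^ 2)⁻¹) (-(8 * A x ^ 3)⁻¹ • A') x := by
    refine ((hasDerivAt_inv (by positivity)).comp_hasFDerivAt x
      ((hA.pow 2).const_mul 16)).congr_fderiv ?_
    rw [smul_smul, smul_smul]
    congr 1
    simp only [nsmul_eq_mul]
    field_simp
    ring
  refine (hnum.mul hden).congr_fderiv ?_
  simp only [hLdx, hLsx]
  match_scalars <;> field_simp <;> ring

end

/-- The differential of the position coordinate `qᵢ₊₁` on phase space (`dq 0` is `dq₁`). -/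
def dq (i : Fin 4) : (Fin 4 → ℝ) × (Fin 4 → ℝ) →L[ℝ] ℝ :=
  (ContinuousLinearMap.proj i).comp (ContinuousLinearMap.fst ℝ _ _)

lemma hasFDerivAt_position (i : Fin 4) (z : (Fin 4 → ℝ) × (Fin 4 → ℝ)) :
    HasFDerivAt (fun z : (Fin 4 → ℝ) × (Fin 4 → ℝ) ↦ z.1 i) (dq i) z :=
  (dq i).hasFDerivAt

lemma hasFDerivAt_momentum_sq (i : Fin 4) (q : Fin 4 → ℝ) :
    HasFDerivAt (fun z : (Fin 4 → ℝ) × (Fin 4 → ℝ) ↦ z.2 i ^ 2)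
      (0 : (Fin 4 → ℝ) × (Fin 4 → ℝ) →L[ℝ] ℝ) (q, 0) := by
  have hp : DifferentiableAt ℝ (fun z : (Fin 4 → ℝ) × (Fin 4 → ℝ) ↦ z.2 i) (q, 0) := by fun_prop
  simpa using hp.hasFDerivAt.pow 2

lemma hasFDerivAt_area_isosceles (q₁ q₄ : ℝ) :
    HasFDerivAt (fun z : (Fin 4 → ℝ) × (Fin 4 → ℝ) ↦ (z.1 0 * z.1 3 - z.1 1 * z.1 2) / 2)
      ((q₄ / 2) • dq 0 + (q₁ / 2) • dq 3) (![q₁, 0, 0, q₄], 0) := by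
  have hq := fun i ↦ hasFDerivAt_position i (![q₁, 0, 0, q₄], 0)
  refine ((((hq 0).mul (hq 3)).sub ((hq 1).mul (hq 2))).mul_const (2⁻¹ : ℝ)).congr_fderiv ?_
  simp only [Matrix.cons_val, zero_smul, add_zero, sub_zero]
  module

/-- The invariants `(‖x‖², ‖y‖², ⟪x, y⟫)` of the Jacobi vectors `x = (q₁, q₂)`, `y = (q₃, q₄)`. -/
def jacobiInvariants (q : Fin 4 → ℝ) : Fin 3 → ℝ :=
  ![q 0 ^ 2 + q 1 ^ 2, q 2 ^ 2 + q 3 ^ 2, q 0 * q 2 + q 1 * q 3]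

lemma jacobiInvariants_isosceles (q₁ q₄ : ℝ) :
    jacobiInvariants ![q₁, 0, 0, q₄] = ![q₁ ^ 2, q₄ ^ 2, 0] := by
  simp [jacobiInvariants]

lemma hasFDerivAt_jacobiInvariants_isosceles (q₁ q₄ : ℝ) :
    HasFDerivAt (fun z : (Fin 4 → ℝ) × (Fin 4 → ℝ) ↦ jacobiInvariants z.1)
      (.pi ![(2 * q₁) • dq 0, (2 * q₄) • dq 3, q₄ • dq 1 + q₁ • dq 2]) (![q₁, 0, 0, q₄], 0) := by
  have hq := fun i ↦ hasFDerivAt_position i (![q₁, 0, 0, q₄], 0)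
  refine hasFDerivAt_pi.mpr fun i ↦ ?_
  fin_cases i
  · exact (((hq 0).pow 2).add ((hq 1).pow 2)).congr_fderiv (by simp)
  · exact (((hq 2).pow 2).add ((hq 3).pow 2)).congr_fderiv (by simp)
  · exact (((hq 0).mul (hq 2)).add ((hq 1).mul (hq 3))).congr_fderiv (by simp [add_comm])

lemma hasFDerivAt_Hred_isosceles {ν₁ ν₂ μ₁ μ₂ q₁ q₄ V₁ V₂ V₃ : ℝ} {V : (Fin 3 → ℝ) → ℝ}
    (hμ : |μ₂| < μ₁) (hq₁ : q₁ ≠ 0) (hq₄ : q₄ ≠ 0)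
    (hV : HasFDerivAt V (V₁ • .proj 0 + V₂ • .proj 1 + V₃ • .proj 2 : (Fin 3 → ℝ) →L[ℝ] ℝ)
      ![q₁ ^ 2, q₄ ^ 2, 0]) :
    HasFDerivAt (Hred ν₁ ν₂ μ₁ μ₂ V)
      ((2 * q₁ * V₁ - μ₂ ^ 2 / (ν₁ * q₁ ^ 3)) • dq 0 +
        (2 * q₄ * V₂ - μ₁ ^ 2 / (ν₂ * q₄ ^ 3)) • dq 3 + V₃ • (q₄ • dq 1 + q₁ • dq 2))
      (![q₁, 0, 0, q₄], 0) := by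
  have hq := fun i ↦ hasFDerivAt_position i (![q₁, 0, 0, q₄], 0)
  have hp := fun i ↦ hasFDerivAt_momentum_sq i ![q₁, 0, 0, q₄]
  have hA := hasFDerivAt_area_isosceles q₁ q₄
  have hL : DifferentiableAt ℝ (fun z : (Fin 4 → ℝ) × (Fin 4 → ℝ) ↦
      z.1 0 * z.2 1 - z.1 1 * z.2 0 + z.1 2 * z.2 3 - z.1 3 * z.2 2) (![q₁, 0, 0, q₄], 0) := by
    fun_prop
  have hf₃₄ : HasFDerivAt _ ((-(2 * μ₂ ^ 2 / q₁ ^ 3)) • dq 0) _ :=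
    (hasFDerivAt_fred hμ hA (hq 2) (hq 3) hL (by simp) (by simp [hq₁, hq₄])).congr_fderiv <| by
      simp only [Matrix.cons_val]
      match_scalars <;> field_simp <;> ring
  have hf₁₂ : HasFDerivAt _ ((-(2 * μ₁ ^ 2 / q₄ ^ 3)) • dq 3) _ :=
    (hasFDerivAt_fred hμ hA (hq 0) (hq 1) hL (by simp) (by simp [hq₁, hq₄])).congr_fderiv <| by
      simp only [Matrix.cons_val]
      match_scalars <;> field_simp <;> ring
  rw [← jacobiInvariants_isosceles] at hV
  have hVs := hV.comp (![q₁, 0, 0, q₄], 0) (hasFDerivAt_jacobiInvariants_isosceles q₁ q₄)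
  refine ((((((hp 0).add (hp 1)).add hf₃₄).const_mul (1 / (2 * ν₁))).add
    ((((hp 2).add (hp 3)).add hf₁₂).const_mul (1 / (2 * ν₂)))).add hVs).congr_fderiv ?_
  simp only [ContinuousLinearMap.add_comp, ContinuousLinearMap.smul_comp,
    ContinuousLinearMap.proj_pi, Matrix.cons_val]
  match_scalars <;> field_simp <;> ring

/-- The squared length `‖y + a x‖²` as a linear function of `s = (‖x‖², ‖y‖², ⟪x, y⟫)`; the squared
distances of the first body to the third and second are the cases `a = a₂` and `a = -a₃`. -/
def distSq (a : ℝ) : (Fin 3 → ℝ) →L[ℝ] ℝ :=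
  a ^ 2 • .proj 0 + .proj 1 + (2 * a) • .proj 2

lemma distSq_apply (a : ℝ) (s : Fin 3 → ℝ) : distSq a s = a ^ 2 * s 0 + s 1 + 2 * a * s 2 := rfl

lemma hasFDerivAt_Vnewt {m₁ m₂ m₃ : ℝ} {s : Fin 3 → ℝ} (hs : 0 < s 0)
    (h₁₃ : 0 < distSq (m₂ / (m₂ + m₃)) s) (h₁₂ : 0 < distSq (-(m₃ / (m₂ + m₃))) s) :
    HasFDerivAt (Vnewt m₁ m₂ m₃)
      ((m₂ * m₃ / (2 * s 0 ^ ((3 : ℝ) / 2))) • .proj 0 +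
        (m₃ * m₁ / (2 * distSq (m₂ / (m₂ + m₃)) s ^ ((3 : ℝ) / 2))) •
          distSq (m₂ / (m₂ + m₃)) +
        (m₁ * m₂ / (2 * distSq (-(m₃ / (m₂ + m₃))) s ^ ((3 : ℝ) / 2))) •
          distSq (-(m₃ / (m₂ + m₃)))) s := by
  have h₂₃ := hasFDerivAt_const_div_sqrt (m₂ * m₃)
    (ContinuousLinearMap.proj (R := ℝ) (φ := fun _ : Fin 3 ↦ ℝ) 0).hasFDerivAt hs
  have hsum := (h₂₃.neg.sub (hasFDerivAt_const_div_sqrt (m₃ * m₁) (distSq _).hasFDerivAt h₁₃)).sub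
    (hasFDerivAt_const_div_sqrt (m₁ * m₂) (distSq _).hasFDerivAt h₁₂)
  refine (hsum.congr_fderiv ?_).congr_of_eventuallyEq (.of_forall fun s ↦ ?_)
  · simp only [ContinuousLinearMap.proj_apply]
    module
  · simp [Vnewt, distSq_apply, sub_eq_add_neg]

lemma hasFDerivAt_Vnewt_isosceles (m m₁ : ℝ) {s₁ s₂ : ℝ} (hm : m ≠ 0) (hs₁ : 0 < s₁)
    (hs : 0 < s₁ + 4 * s₂) :
    HasFDerivAt (Vnewt m₁ m m)
      ((m ^ 2 / (2 * s₁ ^ ((3 : ℝ) / 2)) + 2 * m * m₁ / (s₁ + 4 * s₂) ^ ((3 : ℝ) / 2)) • .proj 0 +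
        (8 * m * m₁ / (s₁ + 4 * s₂) ^ ((3 : ℝ) / 2)) • .proj 1 + (0 : ℝ) • .proj 2 :
        (Fin 3 → ℝ) →L[ℝ] ℝ)
      ![s₁, s₂, 0] := by
  have hhalf : m / (m + m) = 1 / 2 := by field_simp; norm_num
  have h₁₃ : distSq (m / (m + m)) ![s₁, s₂, 0] = (s₁ + 4 * s₂) / 2 ^ 2 := by
    simp only [distSq_apply, hhalf, Matrix.cons_val]
    ring
  have h₁₂ : distSq (-(m / (m + m))) ![s₁, s₂, 0] = (s₁ + 4 * s₂) / 2 ^ 2 := by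
    simp only [distSq_apply, hhalf, Matrix.cons_val]
    ring
  refine (hasFDerivAt_Vnewt hs₁ (by rw [h₁₃]; positivity) (by rw [h₁₂]; positivity)).congr_fderiv ?_
  rw [h₁₃, h₁₂, Real.div_rpow hs.le (by positivity), sq_rpow_three_halves zero_le_two, hhalf]
  simp only [distSq, Matrix.cons_val]
  match_scalars <;> field_simp <;> ring

lemma hasFDerivAt_Hred_Vnewt_isosceles {m m₁ ν₁ ν₂ μ₁ μ₂ q₁ q₄ : ℝ} (hm : m ≠ 0)
    (hμ : |μ₂| < μ₁) (hq₁ : 0 < q₁) (hq₄ : q₄ ≠ 0) :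
    HasFDerivAt (Hred ν₁ ν₂ μ₁ μ₂ (Vnewt m₁ m m))
      ((m ^ 2 / q₁ ^ 2 + 4 * m * m₁ * q₁ / (q₁ ^ 2 + 4 * q₄ ^ 2) ^ ((3 : ℝ) / 2) -
          μ₂ ^ 2 / (ν₁ * q₁ ^ 3)) • dq 0 +
        (16 * m * m₁ * q₄ / (q₁ ^ 2 + 4 * q₄ ^ 2) ^ ((3 : ℝ) / 2) -
          μ₁ ^ 2 / (ν₂ * q₄ ^ 3)) • dq 3)
      (![q₁, 0, 0, q₄], 0) := by
  have hV := hasFDerivAt_Vnewt_isosceles m m₁ (s₁ := q₁ ^ 2) (s₂ := q₄ ^ 2) hm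
    (by positivity) (by positivity)
  refine (hasFDerivAt_Hred_isosceles hμ hq₁.ne' hq₄ hV).congr_fderiv ?_
  rw [sq_rpow_three_halves hq₁.le, zero_smul, add_zero]
  congr 3
  · field_simp
    ring
  · ring

lemma exists_cubic_eq_sq_sub_one_sq {a b : ℝ} (ha : 0 < a) (hb : 0 ≤ b) :
    ∃ u : ℝ, 1 < u ∧ a * u ^ 3 + b = (u ^ 2 - 1) ^ 2 := by
  let f : ℝ → ℝ := fun u ↦ (u ^ 2 - 1) ^ 2 - (a * u ^ 3 + b)
  let U : ℝ := 2 + 2 * a + 2 * b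
  have hU : 2 ≤ U := by simp only [U]; linarith
  have hf1 : f 1 < 0 := by simp only [f]; nlinarith
  have hfU : 0 < f U := by
    have hsq : 3 / 4 * U ^ 2 ≤ U ^ 2 - 1 := by nlinarith [hU]
    have hquartic : 9 / 16 * U ^ 4 ≤ (U ^ 2 - 1) ^ 2 :=
      calc 9 / 16 * U ^ 4 = (3 / 4 * U ^ 2) ^ 2 := by ring
        _ ≤ (U ^ 2 - 1) ^ 2 := by gcongr
    have hcubic : (a + b) * U ^ 3 < 9 / 16 * U * U ^ 3 := by
      gcongr
      simp only [U]
      linarith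
    have hbU : b ≤ b * U ^ 3 := le_mul_of_one_le_right hb (one_le_pow₀ (by linarith))
    simp only [f]
    linarith
  obtain ⟨u, hu, hfu⟩ := intermediate_value_Ioo (by linarith : 1 ≤ U)
    (show Continuous f by fun_prop).continuousOn ⟨hf1, hfU⟩
  exact ⟨u, hu.1, by simp only [f] at hfu; linarith⟩

lemma exists_isosceles_balance {α β γ c₁ c₂ : ℝ} (hα : 0 < α) (hβ : 0 ≤ β) (hγ : 0 < γ)
    (hc₁ : 0 < c₁) (hc₂ : 0 < c₂) :
    ∃ x y : ℝ, 0 < x ∧ 0 < y ∧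
      α / x ^ 2 + β * x / (x ^ 2 + 4 * y ^ 2) ^ ((3 : ℝ) / 2) - c₁ / x ^ 3 = 0 ∧
      γ * y / (x ^ 2 + 4 * y ^ 2) ^ ((3 : ℝ) / 2) - c₂ / y ^ 3 = 0 := by
  obtain ⟨u, hu, hroot⟩ := exists_cubic_eq_sq_sub_one_sq
    (a := 16 * c₂ * α / (γ * c₁)) (b := 16 * c₂ * β / (γ * c₁)) (by positivity) (by positivity)
  have hu0 : 0 < u := one_pos.trans hu
  have hu2 : 0 < u ^ 2 - 1 := by nlinarith
  let x := c₁ * u ^ 3 / (α * u ^ 3 + β)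
  let t := √(u ^ 2 - 1) / 2
  have hx : 0 < x := by positivity
  have ht : 0 < t := by positivity
  have ht2 : 4 * t ^ 2 = u ^ 2 - 1 := by
    simp only [t, div_pow, Real.sq_sqrt hu2.le]
    ring
  have hscale : x * (α * u ^ 3 + β) = c₁ * u ^ 3 := by
    simp only [x]
    field_simp
  have hratio : γ * t ^ 4 * c₁ = c₂ * (α * u ^ 3 + β) := by
    rw [← ht2] at hroot
    field_simp at hroot
    linarith
  have hbal : γ * t ^ 4 * x = c₂ * u ^ 3 := by
    have : 0 < α * u ^ 3 + β := by positivity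
    apply mul_right_cancel₀ this.ne'
    linear_combination γ * t ^ 4 * hscale + u ^ 3 * hratio
  have hside : (x ^ 2 + 4 * (t * x) ^ 2) ^ ((3 : ℝ) / 2) = (u * x) ^ 3 := by
    rw [← sq_rpow_three_halves (mul_pos hu0 hx).le]
    congr 1
    linear_combination x ^ 2 * ht2
  refine ⟨x, t * x, hx, by positivity, ?_, ?_⟩
  all_goals
    rw [hside, sub_eq_zero]
    field_simp
    linarith

/-- For two equal masses `m₂ = m₃ = m` there exist `q₁, q₄ > 0` solving the isosceles
equilibrium equations, and every such solution gives a critical point (relative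
equilibrium) of the fully reduced Hamiltonian with `q₂ = q₃ = 0`, `p = 0`. -/
theorem isosceles_equilibrium (m m₁ μ₁ μ₂ : ℝ) (hm : 0 < m) (hm₁ : 0 < m₁)
    (hμ : μ₁ > μ₂) (hμ₂ : 0 < μ₂) :
    (∃ q₁ q₄ : ℝ, 0 < q₁ ∧ 0 < q₄ ∧
      m ^ 2 / q₁ ^ 2 + 4 * m * m₁ * q₁ / (q₁ ^ 2 + 4 * q₄ ^ 2) ^ ((3 : ℝ) / 2) -
        μ₂ ^ 2 / ((m / 2) * q₁ ^ 3) = 0 ∧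
      16 * m * m₁ * q₄ / (q₁ ^ 2 + 4 * q₄ ^ 2) ^ ((3 : ℝ) / 2) -
        μ₁ ^ 2 / ((2 * m * m₁ / (2 * m + m₁)) * q₄ ^ 3) = 0) ∧
    ∀ q₁ q₄ : ℝ, 0 < q₁ → 0 < q₄ →
      m ^ 2 / q₁ ^ 2 + 4 * m * m₁ * q₁ / (q₁ ^ 2 + 4 * q₄ ^ 2) ^ ((3 : ℝ) / 2) -
        μ₂ ^ 2 / ((m / 2) * q₁ ^ 3) = 0 →
      16 * m * m₁ * q₄ / (q₁ ^ 2 + 4 * q₄ ^ 2) ^ ((3 : ℝ) / 2) -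
        μ₁ ^ 2 / ((2 * m * m₁ / (2 * m + m₁)) * q₄ ^ 3) = 0 →
      fderiv ℝ (Hred (m / 2) (2 * m * m₁ / (2 * m + m₁)) μ₁ μ₂ (Vnewt m₁ m m))
        (![q₁, 0, 0, q₄], (0 : Fin 4 → ℝ)) = 0 := by
  constructor
  · obtain ⟨q₁, q₄, hq₁, hq₄, h₁, h₄⟩ := exists_isosceles_balance
      (α := m ^ 2) (β := 4 * m * m₁) (γ := 16 * m * m₁) (c₁ := μ₂ ^ 2 / (m / 2))
      (c₂ := μ₁ ^ 2 / (2 * m * m₁ / (2 * m + m₁)))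
      (by positivity) (by positivity) (by positivity) (by positivity)
      (div_pos (pow_pos (hμ₂.trans hμ) 2) (by positivity))
    exact ⟨q₁, q₄, hq₁, hq₄, by rwa [← div_div (μ₂ ^ 2)], by rwa [← div_div (μ₁ ^ 2)]⟩
  · intro q₁ q₄ hq₁ hq₄ h₁ h₄
    have habs : |μ₂| < μ₁ := by rwa [abs_of_pos hμ₂]
    rw [(hasFDerivAt_Hred_Vnewt_isosceles hm.ne' habs hq₁ hq₄.ne').fderiv, h₁, h₄, zero_smul,
      zero_smul, add_zero]

end
end

section
/- Let m₂ = m₃ = m > 0 and m₁ > 0, and fix μ₁ > 0. Then there exists ε > 0 such that for every μ₂ ∈ (0, ε) there are q₁, q₄ > 0 satisfying the isosceles equilibrium equations m²/q₁² + 4mm₁q₁/(q₁²+4q₄²)^{3/2} − μ₂²/(ν₁q₁³) = 0 and 16mm₁q₄/(q₁²+4q₄²)^{3/2} − μ₁²/(ν₂q₄³) = 0 for which the point (q₁, 0, 0, q₄, 0, 0, 0, 0) (positions (q₁,0,0,q₄), momenta all zero) is a strict local minimum of the fully reduced Hamiltonian H with parameters (μ₁, μ₂). -/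
noncomputable section

/-!
Near a sufficiently slender isosceles equilibrium, `H` is at least the sum of two uncoupled Kepler
energies, in the lengths of the two Jacobi vectors, and of nonnegative multiples of squares that
measure the momenta and the deviation of the Jacobi vectors from the coordinate axes. The potential
splits because `(x² + y²)^(-1/2) ≤ a³/x + b³/y` whenever `a² + b² = 1`; choosing `(a, b)` along the
equal sides of the triangle gives equality at the equilibrium, whose equations then say that both
Kepler energies are at their circular orbits, where they have strict minima. The error terms are
absorbed by the stiffness of the inner pair, which dominates as `q₁/q₄ → 0`, that is, as `μ₂ → 0`.
-/

open Filter Topology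

lemma three_sub_sq_div_two_le_inv {t : ℝ} (ht : 0 < t) : (3 - t ^ 2) / 2 ≤ t⁻¹ := by
  have factor : t⁻¹ - (3 - t ^ 2) / 2 = (t - 1) ^ 2 * (t + 2) / (2 * t) := by
    field_simp
    ring
  have : 0 ≤ (t - 1) ^ 2 * (t + 2) / (2 * t) := by positivity
  linarith

lemma inv_sqrt_sq_add_sq_le {a b x y : ℝ} (ha : 0 < a) (hb : 0 < b) (hx : 0 < x) (hy : 0 < y)
    (hab : a ^ 2 + b ^ 2 = 1) : (√(x ^ 2 + y ^ 2))⁻¹ ≤ a ^ 3 / x + b ^ 3 / y := by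
  set r := √(x ^ 2 + y ^ 2)
  have hr : 0 < r := Real.sqrt_pos.mpr (by positivity)
  have hr_sq : x ^ 2 + y ^ 2 = r ^ 2 := (Real.sq_sqrt (by positivity)).symm
  calc r⁻¹ = r⁻¹ * ((3 * (a ^ 2 + b ^ 2) - (x ^ 2 + y ^ 2) / r ^ 2) / 2) := by
        rw [hab, hr_sq, div_self (by positivity)]
        norm_num
    _ = r⁻¹ * (a ^ 2 * ((3 - (x / (a * r)) ^ 2) / 2) + b ^ 2 * ((3 - (y / (b * r)) ^ 2) / 2)) := by
        field_simp
        ring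
    _ ≤ r⁻¹ * (a ^ 2 * (x / (a * r))⁻¹ + b ^ 2 * (y / (b * r))⁻¹) := by
        gcongr <;> exact three_sub_sq_div_two_le_inv (by positivity)
    _ = a ^ 3 / x + b ^ 3 / y := by field_simp

lemma inv_sqrt_one_add_le {e : ℝ} (he : -(1 / 4) ≤ e) :
    (√(1 + e))⁻¹ ≤ 1 - e / 2 + e ^ 2 / 2 := by
  have h_one_add : 0 < 1 + e := by linarith
  have h_bound : 0 < 1 - e / 2 + e ^ 2 / 2 := by nlinarith
  have h_cubic : 0 ≤ 1 + 3 * e - e ^ 2 + e ^ 3 := by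
    nlinarith [mul_nonneg (sq_nonneg e) h_one_add.le]
  rw [inv_le_iff_one_le_mul₀ (by positivity), ← one_le_sq_iff₀ (by positivity), mul_pow,
    Real.sq_sqrt h_one_add.le]
  nlinarith [mul_nonneg (sq_nonneg e) h_cubic]

lemma inv_sqrt_add_le {S T : ℝ} (hS : 0 < S) (hT : -(S / 4) ≤ T) :
    (√(S + T))⁻¹ ≤ (1 - T / S / 2 + (T / S) ^ 2 / 2) / √S := by
  have hTS : -(1 / 4) ≤ T / S := by
    rw [le_div_iff₀ hS]
    linarith
  calc (√(S + T))⁻¹ = (√(1 + T / S))⁻¹ / √S := by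
        rw [show S + T = S * (1 + T / S) by field_simp, Real.sqrt_mul hS.le, mul_inv_rev,
          ← div_eq_mul_inv]
    _ ≤ _ := by gcongr; exact inv_sqrt_one_add_le hTS

lemma inv_sqrt_add_add_inv_sqrt_sub_le {S T : ℝ} (hS : 0 < S) (hT : |T| ≤ S / 4) :
    (√(S + T))⁻¹ + (√(S - T))⁻¹ ≤ 2 / √S + T ^ 2 / (S ^ 2 * √S) := by
  obtain ⟨hT_lower, hT_upper⟩ := abs_le.mp hT
  calc (√(S + T))⁻¹ + (√(S + -T))⁻¹
      ≤ (1 - T / S / 2 + (T / S) ^ 2 / 2) / √S + (1 - -T / S / 2 + (-T / S) ^ 2 / 2) / √S :=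
        add_le_add (inv_sqrt_add_le hS hT_lower) (inv_sqrt_add_le hS (neg_le_neg hT_upper))
    _ = 2 / √S + T ^ 2 / (S ^ 2 * √S) := by
        field_simp
        ring

lemma mul_add_mul_le_of_mul_eq_mul {x y a b P Q : ℝ} (hx : 0 < x) (hxa : x ≤ a)
    (hxy : x * y = a * b) (hP : 0 ≤ P) (hPQ : a * P ≤ b * Q) :
    a * P + b * Q ≤ x * P + y * Q := by
  have h_factor : x * (x * P + y * Q - (a * P + b * Q)) = (a - x) * (b * Q - x * P) := by
    linear_combination Q * hxy
  have h_nonneg : 0 ≤ x * (x * P + y * Q - (a * P + b * Q)) := by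
    rw [h_factor]
    have := mul_le_mul_of_nonneg_right hxa hP
    exact mul_nonneg (sub_nonneg.mpr hxa) (by linarith)
  exact sub_nonneg.mp (nonneg_of_mul_nonneg_right h_nonneg hx)

lemma sq_sqrt_add_sqrt_mul_sq_sqrt_sub_sqrt {u v : ℝ} (hu : 0 ≤ u) (hv : 0 ≤ v) :
    (√u + √v) ^ 2 * (√u - √v) ^ 2 = (u - v) ^ 2 := by
  calc (√u + √v) ^ 2 * (√u - √v) ^ 2 = (√u ^ 2 - √v ^ 2) ^ 2 := by ring
    _ = (u - v) ^ 2 := by rw [Real.sq_sqrt hu, Real.sq_sqrt hv]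

lemma sqrt_sq_sub_sq_le {a : ℝ} (ha : 0 ≤ a) (L : ℝ) : √(a ^ 2 - L ^ 2) ≤ a :=
  Real.sqrt_le_iff.mpr ⟨ha, sub_le_self _ (sq_nonneg L)⟩

/-- Twice the quantity called `A` in the reduction: the oriented area spanned by the Jacobi vectors
`(q 0, q 1)` and `(q 2, q 3)` in their common plane. -/
def jacobiArea (q : Fin 4 → ℝ) : ℝ := q 0 * q 3 - q 1 * q 2

/-- The Gram invariants `(s₁, s₂, s₃)` of the Jacobi vectors, on which the potential depends: their
squared lengths, then their inner product. -/
def jacobiGram (q : Fin 4 → ℝ) : Fin 3 → ℝ :=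
  ![q 0 ^ 2 + q 1 ^ 2, q 2 ^ 2 + q 3 ^ 2, q 0 * q 2 + q 1 * q 3]

/-- The angular momentum `L₃`. -/
def angMom (z : (Fin 4 → ℝ) × (Fin 4 → ℝ)) : ℝ :=
  z.1 0 * z.2 1 - z.1 1 * z.2 0 + z.1 2 * z.2 3 - z.1 3 * z.2 2

/-- The kinetic energy of the reduced momenta `p`. -/
def kinetic (ν₁ ν₂ : ℝ) (p : Fin 4 → ℝ) : ℝ :=
  (p 0 ^ 2 + p 1 ^ 2) / (2 * ν₁) + (p 2 ^ 2 + p 3 ^ 2) / (2 * ν₂)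

/-- The quadratic form in `q` that multiplies `μ₁ ^ 2` in the centrifugal energy at `L₃ = 0`. -/
def majorWeight (ν₁ ν₂ : ℝ) (q : Fin 4 → ℝ) : ℝ := q 2 ^ 2 / (2 * ν₁) + q 0 ^ 2 / (2 * ν₂)

/-- The quadratic form in `q` that multiplies `μ₂ ^ 2` in the centrifugal energy at `L₃ = 0`. -/
def minorWeight (ν₁ ν₂ : ℝ) (q : Fin 4 → ℝ) : ℝ := q 3 ^ 2 / (2 * ν₁) + q 1 ^ 2 / (2 * ν₂)

/-- The centrifugal energy: the two `f`-terms of the Hamiltonian, at angular momentum `L₃ = L`. -/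
def centrifugal (ν₁ ν₂ μ₁ μ₂ L : ℝ) (q : Fin 4 → ℝ) : ℝ :=
  ((√((μ₁ - μ₂) ^ 2 - L ^ 2) + √((μ₁ + μ₂) ^ 2 - L ^ 2)) ^ 2 * majorWeight ν₁ ν₂ q +
    (√((μ₁ - μ₂) ^ 2 - L ^ 2) - √((μ₁ + μ₂) ^ 2 - L ^ 2)) ^ 2 * minorWeight ν₁ ν₂ q) /
      (4 * jacobiArea q ^ 2)

section Reduction

variable {ν₁ ν₂ μ₁ μ₂ : ℝ}

@[fun_prop]
lemma continuous_jacobiArea : Continuous jacobiArea := by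
  unfold jacobiArea
  fun_prop

@[fun_prop]
lemma continuous_jacobiGram : Continuous jacobiGram := by
  unfold jacobiGram
  fun_prop

@[fun_prop]
lemma continuous_angMom : Continuous angMom := by
  unfold angMom
  fun_prop

@[fun_prop]
lemma continuous_majorWeight : Continuous (majorWeight ν₁ ν₂) := by
  unfold majorWeight
  fun_prop

@[fun_prop]
lemma continuous_minorWeight : Continuous (minorWeight ν₁ ν₂) := by
  unfold minorWeight
  fun_prop

lemma jacobiArea_sq (q : Fin 4 → ℝ) :
    jacobiArea q ^ 2 = jacobiGram q 0 * jacobiGram q 1 - jacobiGram q 2 ^ 2 := by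
  simp only [jacobiArea, jacobiGram, Matrix.cons_val]
  ring

lemma jacobiGram_pos_of_jacobiArea_ne_zero {q : Fin 4 → ℝ} (hq : jacobiArea q ≠ 0) :
    0 < jacobiGram q 0 ∧ 0 < jacobiGram q 1 := by
  have h_nonneg₀ : 0 ≤ jacobiGram q 0 := add_nonneg (sq_nonneg (q 0)) (sq_nonneg (q 1))
  have h_nonneg₁ : 0 ≤ jacobiGram q 1 := add_nonneg (sq_nonneg (q 2)) (sq_nonneg (q 3))
  have h_mul : 0 < jacobiGram q 0 * jacobiGram q 1 := by
    have := jacobiArea_sq q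
    have : 0 < jacobiArea q ^ 2 := by positivity
    linarith [sq_nonneg (jacobiGram q 2)]
  exact ⟨pos_of_mul_pos_left h_mul h_nonneg₁, pos_of_mul_pos_right h_mul h_nonneg₀⟩

lemma kinetic_nonneg (hν₁ : 0 ≤ ν₁) (hν₂ : 0 ≤ ν₂) (p : Fin 4 → ℝ) : 0 ≤ kinetic ν₁ ν₂ p := by
  unfold kinetic
  positivity

lemma eq_zero_of_kinetic_nonpos (hν₁ : 0 < ν₁) (hν₂ : 0 < ν₂) {p : Fin 4 → ℝ}
    (hp : kinetic ν₁ ν₂ p ≤ 0) : p = 0 := by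
  have h_nonneg₁ : 0 ≤ (p 0 ^ 2 + p 1 ^ 2) / (2 * ν₁) := by positivity
  have h_nonneg₂ : 0 ≤ (p 2 ^ 2 + p 3 ^ 2) / (2 * ν₂) := by positivity
  obtain ⟨h₁, h₂⟩ := (add_eq_zero_iff_of_nonneg h_nonneg₁ h_nonneg₂).mp
    (hp.antisymm (add_nonneg h_nonneg₁ h_nonneg₂))
  have sum_sq_zero : ∀ {a b ν : ℝ}, 0 < ν → (a ^ 2 + b ^ 2) / (2 * ν) = 0 → a = 0 ∧ b = 0 := by
    intro a b ν hν h
    rw [div_eq_zero_iff, or_iff_left (by positivity),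
      add_eq_zero_iff_of_nonneg (sq_nonneg a) (sq_nonneg b)] at h
    simpa using h
  funext i
  fin_cases i
  exacts [(sum_sq_zero hν₁ h₁).1, (sum_sq_zero hν₁ h₁).2, (sum_sq_zero hν₂ h₂).1,
    (sum_sq_zero hν₂ h₂).2]

lemma Hred_eq (V : (Fin 3 → ℝ) → ℝ) (z : (Fin 4 → ℝ) × (Fin 4 → ℝ)) :
    Hred ν₁ ν₂ μ₁ μ₂ V z =
      kinetic ν₁ ν₂ z.2 + centrifugal ν₁ ν₂ μ₁ μ₂ (angMom z) z.1 + V (jacobiGram z.1) := by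
  simp only [Hred, fred, kinetic, centrifugal, angMom, jacobiArea, majorWeight, minorWeight,
    jacobiGram]
  generalize z.1 0 * z.1 3 - z.1 1 * z.1 2 = d
  ring

lemma centrifugal_zero (h₂ : 0 ≤ μ₂) (h₁₂ : μ₂ ≤ μ₁) (q : Fin 4 → ℝ) :
    centrifugal ν₁ ν₂ μ₁ μ₂ 0 q =
      (μ₁ ^ 2 * majorWeight ν₁ ν₂ q + μ₂ ^ 2 * minorWeight ν₁ ν₂ q) / jacobiArea q ^ 2 := by
  rw [centrifugal, zero_pow two_ne_zero, sub_zero, sub_zero, Real.sqrt_sq (sub_nonneg.mpr h₁₂),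
    Real.sqrt_sq (add_nonneg (h₂.trans h₁₂) h₂)]
  ring

/-- The squares `(L_d ± L_s) ^ 2` have a product independent of `L₃`, so a nonzero `L₃` shifts
weight from the major to the minor form; this costs energy where the minor form dominates. -/
lemma centrifugal_zero_le {L : ℝ} {q : Fin 4 → ℝ} (hν₁ : 0 ≤ ν₁) (hν₂ : 0 ≤ ν₂) (h₂ : 0 ≤ μ₂)
    (hL : |L| < μ₁ - μ₂)
    (hq : μ₁ ^ 2 * majorWeight ν₁ ν₂ q ≤ μ₂ ^ 2 * minorWeight ν₁ ν₂ q) :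
    centrifugal ν₁ ν₂ μ₁ μ₂ 0 q ≤ centrifugal ν₁ ν₂ μ₁ μ₂ L q := by
  have h₁₂ : 0 < μ₁ - μ₂ := (abs_nonneg L).trans_lt hL
  have hd : 0 < (μ₁ - μ₂) ^ 2 - L ^ 2 := sub_pos.mpr (sq_lt_sq.mpr (hL.trans_le (le_abs_self _)))
  have hs : 0 ≤ (μ₁ + μ₂) ^ 2 - L ^ 2 := by nlinarith
  have h_prod := sq_sqrt_add_sqrt_mul_sq_sqrt_sub_sqrt hd.le hs
  have h_sum : √((μ₁ - μ₂) ^ 2 - L ^ 2) + √((μ₁ + μ₂) ^ 2 - L ^ 2) ≤ 2 * μ₁ := by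
    linarith [sqrt_sq_sub_sq_le h₁₂.le L, sqrt_sq_sub_sq_le (show 0 ≤ μ₁ + μ₂ by linarith) L]
  have h_weights := mul_add_mul_le_of_mul_eq_mul (a := 4 * μ₁ ^ 2) (b := 4 * μ₂ ^ 2)
    (P := majorWeight ν₁ ν₂ q) (Q := minorWeight ν₁ ν₂ q)
    (sq_pos_of_pos (add_pos_of_pos_of_nonneg (Real.sqrt_pos.mpr hd) (Real.sqrt_nonneg _)))
    ((pow_le_pow_left₀ (by positivity) h_sum 2).trans_eq (by ring))
    (h_prod.trans (by ring)) (by unfold majorWeight; positivity) (by linarith)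
  rw [centrifugal_zero h₂ (sub_pos.mp h₁₂).le]
  calc _ = (4 * μ₁ ^ 2 * majorWeight ν₁ ν₂ q + 4 * μ₂ ^ 2 * minorWeight ν₁ ν₂ q) /
        (4 * jacobiArea q ^ 2) := by ring
    _ ≤ _ := by
      unfold centrifugal
      gcongr

/-- The first two terms are the centrifugal energies of two uncoupled Kepler problems; the bracket
is what coupling the two planar rotations adds. -/
lemma centrifugal_zero_eq (hν₁ : ν₁ ≠ 0) (hν₂ : ν₂ ≠ 0) (h₂ : 0 ≤ μ₂) (h₁₂ : μ₂ ≤ μ₁)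
    {q : Fin 4 → ℝ} (hq : jacobiArea q ≠ 0) :
    centrifugal ν₁ ν₂ μ₁ μ₂ 0 q =
      μ₂ ^ 2 / (2 * ν₁ * jacobiGram q 0) + μ₁ ^ 2 / (2 * ν₂ * jacobiGram q 1) +
        ((μ₂ ^ 2 / (2 * ν₁ * jacobiGram q 0) + μ₁ ^ 2 / (2 * ν₂ * jacobiGram q 1)) *
            jacobiGram q 2 ^ 2 +
          (μ₁ ^ 2 - μ₂ ^ 2) * (q 2 ^ 2 / (2 * ν₁) - q 1 ^ 2 / (2 * ν₂))) / jacobiArea q ^ 2 := by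
  obtain ⟨hs₀, hs₁⟩ := jacobiGram_pos_of_jacobiArea_ne_zero hq
  have h_major : q 0 ^ 2 = jacobiGram q 0 - q 1 ^ 2 := (add_sub_cancel_right _ _).symm
  have h_minor : q 3 ^ 2 = jacobiGram q 1 - q 2 ^ 2 := (add_sub_cancel_left _ _).symm
  have h_inner : jacobiGram q 2 ^ 2 = jacobiGram q 0 * jacobiGram q 1 - jacobiArea q ^ 2 := by
    rw [jacobiArea_sq]
    ring
  rw [centrifugal_zero h₂ h₁₂, majorWeight, minorWeight, h_major, h_minor, h_inner]
  field_simp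
  ring

/-- The stiffness of `centrifugal` against rotating the second Jacobi vector off its axis. -/
def tiltStiffness (ν₁ ν₂ μ₁ μ₂ : ℝ) (q : Fin 4 → ℝ) : ℝ :=
  (μ₁ ^ 2 - μ₂ ^ 2) * (1 / (2 * ν₁) - q 0 ^ 2 / (ν₂ * q 3 ^ 2)) / jacobiArea q ^ 2

/-- The stiffness of `centrifugal` against loss of orthogonality of the Jacobi vectors. -/
def shearStiffness (ν₁ ν₂ μ₁ μ₂ : ℝ) (q : Fin 4 → ℝ) : ℝ :=
  (μ₂ ^ 2 / (2 * ν₁ * jacobiGram q 0) - (μ₁ ^ 2 - μ₂ ^ 2) / (ν₂ * q 3 ^ 2)) / jacobiArea q ^ 2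

lemma continuousAt_tiltStiffness (hν₂ : ν₂ ≠ 0) {q : Fin 4 → ℝ}
    (hq : jacobiArea q ≠ 0) (hq3 : q 3 ≠ 0) : ContinuousAt (tiltStiffness ν₁ ν₂ μ₁ μ₂) q := by
  unfold tiltStiffness
  fun_prop (disch := positivity)

lemma continuousAt_shearStiffness (hν₁ : ν₁ ≠ 0) (hν₂ : ν₂ ≠ 0) {q : Fin 4 → ℝ}
    (hq : jacobiArea q ≠ 0) (hq3 : q 3 ≠ 0) : ContinuousAt (shearStiffness ν₁ ν₂ μ₁ μ₂) q := by
  have h_gram := (jacobiGram_pos_of_jacobiArea_ne_zero hq).1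
  have c_gram : ContinuousAt (fun q ↦ jacobiGram q 0) q :=
    ((continuous_apply 0).comp continuous_jacobiGram).continuousAt
  have c_inner : ContinuousAt (fun q ↦ μ₂ ^ 2 / (2 * ν₁ * jacobiGram q 0)) q :=
    continuousAt_const.div (c_gram.const_mul _) (by positivity)
  have c_outer : ContinuousAt (fun q : Fin 4 → ℝ ↦ (μ₁ ^ 2 - μ₂ ^ 2) / (ν₂ * q 3 ^ 2)) q :=
    continuousAt_const.div (Continuous.continuousAt (by fun_prop)) (by positivity)
  exact (c_inner.sub c_outer).div (by fun_prop) (by positivity)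

lemma le_centrifugal_zero (hν₁ : 0 < ν₁) (hν₂ : 0 < ν₂) (h₂ : 0 ≤ μ₂) (h₁₂ : μ₂ ≤ μ₁)
    {q : Fin 4 → ℝ} (hq : jacobiArea q ≠ 0) (hq3 : q 3 ≠ 0) :
    μ₂ ^ 2 / (2 * ν₁ * jacobiGram q 0) + μ₁ ^ 2 / (2 * ν₂ * jacobiGram q 1) +
        tiltStiffness ν₁ ν₂ μ₁ μ₂ q * q 2 ^ 2 +
          shearStiffness ν₁ ν₂ μ₁ μ₂ q * jacobiGram q 2 ^ 2 ≤
      centrifugal ν₁ ν₂ μ₁ μ₂ 0 q := by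
  obtain ⟨_, hs₁⟩ := jacobiGram_pos_of_jacobiArea_ne_zero hq
  have hD : 0 ≤ μ₁ ^ 2 - μ₂ ^ 2 := sub_nonneg.mpr (pow_le_pow_left₀ h₂ h₁₂ 2)
  have h_q1 : q 1 ^ 2 ≤ 2 * (jacobiGram q 2 ^ 2 + (q 0 * q 2) ^ 2) / q 3 ^ 2 := by
    have h_mul : q 1 * q 3 = jacobiGram q 2 - q 0 * q 2 := (add_sub_cancel_left _ _).symm
    rw [le_div_iff₀ (by positivity), ← mul_pow, h_mul]
    linarith [sq_nonneg (jacobiGram q 2 + q 0 * q 2)]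
  rw [centrifugal_zero_eq hν₁.ne' hν₂.ne' h₂ h₁₂ hq, add_assoc]
  gcongr _ + ?_
  calc tiltStiffness ν₁ ν₂ μ₁ μ₂ q * q 2 ^ 2 + shearStiffness ν₁ ν₂ μ₁ μ₂ q * jacobiGram q 2 ^ 2
      = (μ₂ ^ 2 / (2 * ν₁ * jacobiGram q 0) * jacobiGram q 2 ^ 2 + (μ₁ ^ 2 - μ₂ ^ 2) *
          (q 2 ^ 2 / (2 * ν₁) - 2 * (jacobiGram q 2 ^ 2 + (q 0 * q 2) ^ 2) / q 3 ^ 2 / (2 * ν₂))) /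
            jacobiArea q ^ 2 := by
        unfold tiltStiffness shearStiffness
        ring
    _ ≤ _ := by
        gcongr
        exact le_add_of_nonneg_right (by positivity)

end Reduction

/-- The effective energy at radius `r` of a Kepler problem with reduced mass `ν` and angular
momentum `c`, whose attraction is normalised to make `r₀` the radius of the circular orbit. -/
def keplerEnergy (c ν r₀ r : ℝ) : ℝ := c ^ 2 / (2 * ν * r ^ 2) - c ^ 2 / (ν * r₀ * r)

lemma keplerEnergy_sub_self (c ν r₀ r : ℝ) :
    keplerEnergy c ν r₀ r - keplerEnergy c ν r₀ r₀ = c ^ 2 / (2 * ν) * (r⁻¹ - r₀⁻¹) ^ 2 := by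
  unfold keplerEnergy
  ring

lemma keplerEnergy_self_le {ν : ℝ} (hν : 0 ≤ ν) (c r₀ r : ℝ) :
    keplerEnergy c ν r₀ r₀ ≤ keplerEnergy c ν r₀ r := by
  rw [← sub_nonneg, keplerEnergy_sub_self]
  positivity

lemma eq_of_keplerEnergy_le_self {c ν r₀ r : ℝ} (hν : 0 < ν) (hc : c ≠ 0)
    (h : keplerEnergy c ν r₀ r ≤ keplerEnergy c ν r₀ r₀) : r = r₀ := by
  have h_zero := sub_eq_zero.mpr (h.antisymm (keplerEnergy_self_le hν.le c r₀ r))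
  rw [keplerEnergy_sub_self, mul_eq_zero_iff_left (by positivity), sq_eq_zero_iff,
    sub_eq_zero, inv_inj] at h_zero
  exact h_zero

/-- The mean of the squared distances from `m₁` to two equal masses, as a function of the Gram
invariants; the two squared distances are `meanSqDist s ± s 2`. -/
def meanSqDist (s : Fin 3 → ℝ) : ℝ := s 0 / 4 + s 1

@[fun_prop]
lemma continuous_meanSqDist : Continuous meanSqDist := by
  unfold meanSqDist
  fun_prop

section Potential

variable {m m₁ : ℝ}

lemma Vnewt_equal_masses (hm : m ≠ 0) (s : Fin 3 → ℝ) :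
    Vnewt m₁ m m s = -(m ^ 2 / √(s 0)) -
      m * m₁ * ((√(meanSqDist s + s 2))⁻¹ + (√(meanSqDist s - s 2))⁻¹) := by
  have h_half : m / (m + m) = 1 / 2 := by
    rw [← two_mul, div_mul_cancel_right₀ hm, one_div]
  have h_add : (1 / 2) ^ 2 * s 0 + s 1 + 2 * (1 / 2) * s 2 = meanSqDist s + s 2 := by
    unfold meanSqDist
    ring
  have h_sub : (1 / 2) ^ 2 * s 0 + s 1 - 2 * (1 / 2) * s 2 = meanSqDist s - s 2 := by
    unfold meanSqDist
    ring
  rw [Vnewt, h_half, h_add, h_sub]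
  ring

/-- The potential is bounded below by two uncoupled Kepler potentials, up to a term quadratic in the
inner product `s 2`. The weights are free; they are later chosen to give equality at the
equilibrium. -/
lemma le_Vnewt_equal_masses (hm : 0 < m) (hm₁ : 0 ≤ m₁) {a b : ℝ} (ha : 0 < a) (hb : 0 < b)
    (hab : a ^ 2 + b ^ 2 = 1) {s : Fin 3 → ℝ} (hs₀ : 0 < s 0) (hs₁ : 0 < s 1)
    (hs₂ : |s 2| ≤ meanSqDist s / 4) :
    -((m ^ 2 + 4 * (m * m₁) * a ^ 3) / √(s 0)) - 2 * (m * m₁) * b ^ 3 / √(s 1) -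
        m * m₁ / (meanSqDist s ^ 2 * √(meanSqDist s)) * s 2 ^ 2 ≤
      Vnewt m₁ m m s := by
  have h_mean : 0 < meanSqDist s := by
    unfold meanSqDist
    positivity
  have h_mean_eq : (√(s 0) / 2) ^ 2 + √(s 1) ^ 2 = meanSqDist s := by
    rw [div_pow, Real.sq_sqrt hs₀.le, Real.sq_sqrt hs₁.le, meanSqDist]
    norm_num
  have h_split := inv_sqrt_sq_add_sq_le ha hb (half_pos (Real.sqrt_pos.mpr hs₀))
    (Real.sqrt_pos.mpr hs₁) hab
  rw [h_mean_eq] at h_split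
  have h_legs := calc
    (√(meanSqDist s + s 2))⁻¹ + (√(meanSqDist s - s 2))⁻¹
      ≤ 2 * (√(meanSqDist s))⁻¹ + s 2 ^ 2 / (meanSqDist s ^ 2 * √(meanSqDist s)) :=
        inv_sqrt_add_add_inv_sqrt_sub_le h_mean hs₂
    _ ≤ 2 * (a ^ 3 / (√(s 0) / 2) + b ^ 3 / √(s 1)) +
          s 2 ^ 2 / (meanSqDist s ^ 2 * √(meanSqDist s)) := by gcongr
  rw [Vnewt_equal_masses hm.ne']
  calc _ = -(m ^ 2 / √(s 0)) - m * m₁ * (2 * (a ^ 3 / (√(s 0) / 2) + b ^ 3 / √(s 1)) +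
        s 2 ^ 2 / (meanSqDist s ^ 2 * √(meanSqDist s))) := by ring
    _ ≤ _ := by gcongr

end Potential

/-- The phase-space point `(q₁, 0, 0, q₄, 0, 0, 0, 0)`. -/
def isoscelesPoint (q₁ q₄ : ℝ) : (Fin 4 → ℝ) × (Fin 4 → ℝ) := (![q₁, 0, 0, q₄], 0)

/-- Twice the length of the equal sides of the isosceles triangle with base `q₁` and height `q₄`. -/
def doubleLeg (q₁ q₄ : ℝ) : ℝ := √(q₁ ^ 2 + 4 * q₄ ^ 2)

/-- The equations for `isoscelesPoint q₁ q₄` to be a relative equilibrium. -/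
structure IsIsoscelesEquilibrium (m m₁ ν₁ ν₂ μ₁ μ₂ q₁ q₄ : ℝ) : Prop where
  pos₁ : 0 < q₁
  pos₄ : 0 < q₄
  eq₁ : m ^ 2 / q₁ ^ 2 + 4 * m * m₁ * q₁ / (q₁ ^ 2 + 4 * q₄ ^ 2) ^ ((3 : ℝ) / 2) -
    μ₂ ^ 2 / (ν₁ * q₁ ^ 3) = 0
  eq₄ : 16 * m * m₁ * q₄ / (q₁ ^ 2 + 4 * q₄ ^ 2) ^ ((3 : ℝ) / 2) - μ₁ ^ 2 / (ν₂ * q₄ ^ 3) = 0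

section Equilibrium

variable {m m₁ ν₁ ν₂ μ₁ μ₂ q₁ q₄ : ℝ}

lemma doubleLeg_sq (q₁ q₄ : ℝ) : doubleLeg q₁ q₄ ^ 2 = q₁ ^ 2 + 4 * q₄ ^ 2 :=
  Real.sq_sqrt (by positivity)

lemma doubleLeg_pos (q₁ : ℝ) (hq₄ : 0 < q₄) : 0 < doubleLeg q₁ q₄ :=
  Real.sqrt_pos.mpr (by positivity)

lemma two_mul_le_doubleLeg (q₁ q₄ : ℝ) : 2 * q₄ ≤ doubleLeg q₁ q₄ :=
  Real.le_sqrt_of_sq_le (by linarith [sq_nonneg q₁])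

lemma doubleLeg_mul (τ : ℝ) (hq₄ : 0 ≤ q₄) : doubleLeg (τ * q₄) q₄ = doubleLeg τ 1 * q₄ := by
  rw [doubleLeg, doubleLeg, show (τ * q₄) ^ 2 + 4 * q₄ ^ 2 = (τ ^ 2 + 4 * 1 ^ 2) * q₄ ^ 2 by ring,
    Real.sqrt_mul (by positivity), Real.sqrt_sq hq₄]

lemma doubleLeg_rpow (q₁ q₄ : ℝ) :
    (q₁ ^ 2 + 4 * q₄ ^ 2) ^ ((3 : ℝ) / 2) = doubleLeg q₁ q₄ ^ 3 := by
  rw [Real.rpow_div_two_eq_sqrt _ (by positivity), doubleLeg]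
  exact Real.rpow_natCast _ 3

/-- The equilibrium equations say that both uncoupled Kepler problems are on circular orbits. -/
lemma isIsoscelesEquilibrium_iff (hq₁ : 0 < q₁) (hq₄ : 0 < q₄) :
    IsIsoscelesEquilibrium m m₁ ν₁ ν₂ μ₁ μ₂ q₁ q₄ ↔
      m ^ 2 + 4 * (m * m₁) * (q₁ / doubleLeg q₁ q₄) ^ 3 = μ₂ ^ 2 / (ν₁ * q₁) ∧
        2 * (m * m₁) * (2 * q₄ / doubleLeg q₁ q₄) ^ 3 = μ₁ ^ 2 / (ν₂ * q₄) := by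
  have hN := doubleLeg_pos q₁ hq₄
  have h₁ : m ^ 2 / q₁ ^ 2 + 4 * m * m₁ * q₁ / (q₁ ^ 2 + 4 * q₄ ^ 2) ^ ((3 : ℝ) / 2) -
      μ₂ ^ 2 / (ν₁ * q₁ ^ 3) =
        (m ^ 2 + 4 * (m * m₁) * (q₁ / doubleLeg q₁ q₄) ^ 3 - μ₂ ^ 2 / (ν₁ * q₁)) / q₁ ^ 2 := by
    rw [doubleLeg_rpow]
    field_simp
  have h₄ : 16 * m * m₁ * q₄ / (q₁ ^ 2 + 4 * q₄ ^ 2) ^ ((3 : ℝ) / 2) - μ₁ ^ 2 / (ν₂ * q₄ ^ 3) =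
      (2 * (m * m₁) * (2 * q₄ / doubleLeg q₁ q₄) ^ 3 - μ₁ ^ 2 / (ν₂ * q₄)) / q₄ ^ 2 := by
    rw [doubleLeg_rpow]
    field_simp
    ring
  rw [← sub_eq_zero (a := m ^ 2 + _), ← sub_eq_zero (a := 2 * _ * _)]
  constructor
  · intro h
    exact ⟨(div_eq_zero_iff.mp (h₁.symm.trans h.eq₁)).resolve_right (by positivity),
      (div_eq_zero_iff.mp (h₄.symm.trans h.eq₄)).resolve_right (by positivity)⟩
  · rintro ⟨e₁, e₄⟩
    exact ⟨hq₁, hq₄, by rw [h₁, e₁, zero_div], by rw [h₄, e₄, zero_div]⟩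

lemma IsIsoscelesEquilibrium.le_inner_force (h : IsIsoscelesEquilibrium m m₁ ν₁ ν₂ μ₁ μ₂ q₁ q₄)
    (hm : 0 ≤ m) (hm₁ : 0 ≤ m₁) : m ^ 2 / q₁ ≤ μ₂ ^ 2 / (ν₁ * q₁ ^ 2) := by
  have hq₁ := h.pos₁
  have hN := doubleLeg_pos q₁ h.pos₄
  calc m ^ 2 / q₁ ≤ (m ^ 2 + 4 * (m * m₁) * (q₁ / doubleLeg q₁ q₄) ^ 3) / q₁ := by
        gcongr
        exact le_add_of_nonneg_right (by positivity)
    _ = μ₂ ^ 2 / (ν₁ * q₁) / q₁ := by rw [((isIsoscelesEquilibrium_iff h.pos₁ h.pos₄).mp h).1]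
    _ = μ₂ ^ 2 / (ν₁ * q₁ ^ 2) := by rw [div_div, mul_assoc, ← sq]

lemma IsIsoscelesEquilibrium.outer_force_le (h : IsIsoscelesEquilibrium m m₁ ν₁ ν₂ μ₁ μ₂ q₁ q₄)
    (hm : 0 ≤ m) (hm₁ : 0 ≤ m₁) : μ₁ ^ 2 / (ν₂ * q₄ ^ 2) ≤ 2 * (m * m₁ / q₄) := by
  have hq₄ := h.pos₄
  have hN := doubleLeg_pos q₁ h.pos₄
  have h_ratio : 2 * q₄ / doubleLeg q₁ q₄ ≤ 1 := (div_le_one hN).mpr (two_mul_le_doubleLeg q₁ q₄)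
  calc μ₁ ^ 2 / (ν₂ * q₄ ^ 2) = μ₁ ^ 2 / (ν₂ * q₄) / q₄ := by rw [div_div, mul_assoc, ← sq]
    _ = 2 * (m * m₁ / q₄) * (2 * q₄ / doubleLeg q₁ q₄) ^ 3 := by
        rw [← ((isIsoscelesEquilibrium_iff h.pos₁ h.pos₄).mp h).2]
        ring
    _ ≤ 2 * (m * m₁ / q₄) :=
        mul_le_of_le_one_right (by positivity) (pow_le_one₀ (by positivity) h_ratio)

/-- The height `q₄` of an isosceles equilibrium with base `q₁ = τ * q₄`. -/
def outerRadius (m m₁ ν₂ μ₁ τ : ℝ) : ℝ := μ₁ ^ 2 * doubleLeg τ 1 ^ 3 / (16 * (m * m₁) * ν₂)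

/-- The value of `μ₂ ^ 2` in an isosceles equilibrium with base `q₁ = τ * q₄`. -/
def minorMomentumSq (m m₁ ν₁ ν₂ μ₁ τ : ℝ) : ℝ :=
  ν₁ * (τ * outerRadius m m₁ ν₂ μ₁ τ) * (m ^ 2 + 4 * (m * m₁) * (τ / doubleLeg τ 1) ^ 3)

lemma continuous_minorMomentumSq (m m₁ ν₁ ν₂ μ₁ : ℝ) :
    Continuous (minorMomentumSq m m₁ ν₁ ν₂ μ₁) := by
  have h_leg : Continuous fun τ ↦ doubleLeg τ 1 := by
    unfold doubleLeg
    fun_prop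
  have h_ne : ∀ τ, doubleLeg τ 1 ≠ 0 := fun τ ↦ (doubleLeg_pos τ one_pos).ne'
  unfold minorMomentumSq outerRadius
  fun_prop (disch := assumption)

lemma minorMomentumSq_pos (hm : 0 < m) (hm₁ : 0 < m₁) (hν₁ : 0 < ν₁) (hν₂ : 0 < ν₂) (hμ₁ : μ₁ ≠ 0)
    {τ : ℝ} (hτ : 0 < τ) : 0 < minorMomentumSq m m₁ ν₁ ν₂ μ₁ τ := by
  have := doubleLeg_pos τ one_pos
  unfold minorMomentumSq outerRadius
  positivity

lemma isIsoscelesEquilibrium_of_ratio (hm : 0 < m) (hm₁ : 0 < m₁) (hν₁ : 0 < ν₁) (hν₂ : 0 < ν₂)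
    (hμ₁ : μ₁ ≠ 0) {τ : ℝ} (hτ : 0 < τ) (hμ₂ : minorMomentumSq m m₁ ν₁ ν₂ μ₁ τ = μ₂ ^ 2) :
    IsIsoscelesEquilibrium m m₁ ν₁ ν₂ μ₁ μ₂ (τ * outerRadius m m₁ ν₂ μ₁ τ)
      (outerRadius m m₁ ν₂ μ₁ τ) := by
  have hn := doubleLeg_pos τ one_pos
  have hR : 0 < outerRadius m m₁ ν₂ μ₁ τ := by
    unfold outerRadius
    positivity
  rw [isIsoscelesEquilibrium_iff (by positivity) hR, doubleLeg_mul τ hR.le,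
    mul_div_mul_right _ _ hR.ne', mul_div_mul_right _ _ hR.ne']
  constructor
  · rw [← hμ₂, minorMomentumSq, mul_div_cancel_left₀ _ (by positivity)]
  · rw [outerRadius]
    field_simp
    norm_num

lemma exists_isIsoscelesEquilibrium (hm : 0 < m) (hm₁ : 0 < m₁) (hν₁ : 0 < ν₁) (hν₂ : 0 < ν₂)
    (hμ₁ : μ₁ ≠ 0) {τ₁ : ℝ} (hτ₁ : 0 < τ₁) :
    ∃ ε > 0, ∀ μ₂ ∈ Set.Ioo 0 ε, ∃ q₁ q₄,
      IsIsoscelesEquilibrium m m₁ ν₁ ν₂ μ₁ μ₂ q₁ q₄ ∧ q₁ < τ₁ * q₄ := by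
  refine ⟨√(minorMomentumSq m m₁ ν₁ ν₂ μ₁ τ₁),
    Real.sqrt_pos.mpr (minorMomentumSq_pos hm hm₁ hν₁ hν₂ hμ₁ hτ₁), ?_⟩
  rintro μ₂ ⟨h_pos, h_lt⟩
  have h_zero : minorMomentumSq m m₁ ν₁ ν₂ μ₁ 0 = 0 := by simp [minorMomentumSq]
  obtain ⟨τ, ⟨hτ, hττ₁⟩, h_eq⟩ := intermediate_value_Ioo hτ₁.le
    (continuous_minorMomentumSq m m₁ ν₁ ν₂ μ₁).continuousOn
    (show μ₂ ^ 2 ∈ Set.Ioo _ _ from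
      ⟨h_zero.trans_lt (by positivity), (Real.lt_sqrt h_pos.le).mp h_lt⟩)
  have h := isIsoscelesEquilibrium_of_ratio hm hm₁ hν₁ hν₂ hμ₁ hτ h_eq
  exact ⟨_, _, h, mul_lt_mul_of_pos_right hττ₁ h.pos₄⟩

lemma Hred_isoscelesPoint (h : IsIsoscelesEquilibrium m m₁ ν₁ ν₂ μ₁ μ₂ q₁ q₄) (hm : m ≠ 0)
    (h₂ : 0 ≤ μ₂) (h₁₂ : μ₂ ≤ μ₁) :
    Hred ν₁ ν₂ μ₁ μ₂ (Vnewt m₁ m m) (isoscelesPoint q₁ q₄) =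
      keplerEnergy μ₂ ν₁ q₁ q₁ + keplerEnergy μ₁ ν₂ q₄ q₄ := by
  obtain ⟨e₁, e₄⟩ := (isIsoscelesEquilibrium_iff h.pos₁ h.pos₄).mp h
  have hq₁ := h.pos₁
  have hq₄ := h.pos₄
  have hN := doubleLeg_pos q₁ hq₄
  have h_kinetic : kinetic ν₁ ν₂ (isoscelesPoint q₁ q₄).2 = 0 := by
    simp [kinetic, isoscelesPoint]
  have h_angMom : angMom (isoscelesPoint q₁ q₄) = 0 := by simp [angMom, isoscelesPoint]
  have h_centrifugal : centrifugal ν₁ ν₂ μ₁ μ₂ 0 (isoscelesPoint q₁ q₄).1 =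
      μ₂ ^ 2 / (2 * ν₁ * q₁ ^ 2) + μ₁ ^ 2 / (2 * ν₂ * q₄ ^ 2) := by
    simp only [centrifugal_zero h₂ h₁₂, majorWeight, minorWeight, jacobiArea, isoscelesPoint,
      Matrix.cons_val]
    field_simp
    ring
  have h_leg : √(q₁ ^ 2 / 4 + q₄ ^ 2) = doubleLeg q₁ q₄ / 2 := by
    rw [Real.sqrt_eq_iff_eq_sq (by positivity) (by positivity), div_pow, doubleLeg_sq]
    ring
  have h_potential : Vnewt m₁ m m (jacobiGram (isoscelesPoint q₁ q₄).1) =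
      -(m ^ 2 / q₁) - 4 * (m * m₁) / doubleLeg q₁ q₄ := by
    rw [Vnewt_equal_masses hm]
    simp only [meanSqDist, jacobiGram, isoscelesPoint, Matrix.cons_val, mul_zero, zero_mul,
      add_zero, zero_add, sub_zero, zero_pow two_ne_zero, h_leg, Real.sqrt_sq hq₁.le]
    field_simp
    ring
  have h_split : 4 * (m * m₁) / doubleLeg q₁ q₄ =
      4 * (m * m₁) * (q₁ / doubleLeg q₁ q₄) ^ 3 / q₁ +
        2 * (m * m₁) * (2 * q₄ / doubleLeg q₁ q₄) ^ 3 / q₄ := by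
    field_simp
    rw [doubleLeg_sq]
    ring
  rw [Hred_eq, h_kinetic, h_angMom, h_centrifugal, h_potential, h_split, keplerEnergy, keplerEnergy]
  linear_combination -(1 / q₁) * e₁ - 1 / q₄ * e₄

end Equilibrium

/-- The strict inequalities at `z` under which the Hamiltonian is bounded below by two uncoupled
Kepler energies plus nonnegative squares. -/
structure InMinorantRegion (m m₁ ν₁ ν₂ μ₁ μ₂ : ℝ) (z : (Fin 4 → ℝ) × (Fin 4 → ℝ)) : Prop where
  q0_pos : 0 < z.1 0
  q3_pos : 0 < z.1 3
  area_pos : 0 < jacobiArea z.1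
  inner_lt : |jacobiGram z.1 2| < meanSqDist (jacobiGram z.1) / 4
  angMom_lt : |angMom z| < μ₁ - μ₂
  weight_lt : μ₁ ^ 2 * majorWeight ν₁ ν₂ z.1 < μ₂ ^ 2 * minorWeight ν₁ ν₂ z.1
  tilt_pos : 0 < tiltStiffness ν₁ ν₂ μ₁ μ₂ z.1
  shear_lt : m * m₁ / (meanSqDist (jacobiGram z.1) ^ 2 * √(meanSqDist (jacobiGram z.1))) <
    shearStiffness ν₁ ν₂ μ₁ μ₂ z.1

section Minimum

variable {m m₁ ν₁ ν₂ μ₁ μ₂ q₁ q₄ : ℝ} {z : (Fin 4 → ℝ) × (Fin 4 → ℝ)}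

lemma InMinorantRegion.meanSqDist_pos (hz : InMinorantRegion m m₁ ν₁ ν₂ μ₁ μ₂ z) :
    0 < meanSqDist (jacobiGram z.1) := by
  linarith [hz.inner_lt, abs_nonneg (jacobiGram z.1 2)]

lemma InMinorantRegion.eventually (hν₁ : ν₁ ≠ 0) (hν₂ : ν₂ ≠ 0)
    (hz : InMinorantRegion m m₁ ν₁ ν₂ μ₁ μ₂ z) :
    ∀ᶠ w in 𝓝 z, InMinorantRegion m m₁ ν₁ ν₂ μ₁ μ₂ w := by
  have h_area : jacobiArea z.1 ≠ 0 := hz.area_pos.ne'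
  have h_mean := hz.meanSqDist_pos
  have c_fst : ContinuousAt Prod.fst z := continuousAt_fst
  have c_coord : ∀ i, ContinuousAt (fun w : (Fin 4 → ℝ) × (Fin 4 → ℝ) ↦ w.1 i) z := by fun_prop
  have c_inner : ContinuousAt (fun w : (Fin 4 → ℝ) × (Fin 4 → ℝ) ↦ |jacobiGram w.1 2|) z := by
    fun_prop
  have c_mean : ContinuousAt (fun w : (Fin 4 → ℝ) × (Fin 4 → ℝ) ↦
      meanSqDist (jacobiGram w.1) / 4) z :=
    ((continuous_meanSqDist.comp continuous_jacobiGram).continuousAt.comp c_fst).div_const 4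
  have c_major : ContinuousAt (majorWeight ν₁ ν₂ ∘ Prod.fst) z :=
    continuous_majorWeight.continuousAt.comp c_fst
  have c_minor : ContinuousAt (minorWeight ν₁ ν₂ ∘ Prod.fst) z :=
    continuous_minorWeight.continuousAt.comp c_fst
  have c_curv : ContinuousAt (fun w : (Fin 4 → ℝ) × (Fin 4 → ℝ) ↦ m * m₁ /
      (meanSqDist (jacobiGram w.1) ^ 2 * √(meanSqDist (jacobiGram w.1)))) z := by
    fun_prop (disch := positivity)
  filter_upwards [continuousAt_const.eventually_lt (c_coord 0) hz.q0_pos,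
    continuousAt_const.eventually_lt (c_coord 3) hz.q3_pos,
    continuousAt_const.eventually_lt (continuous_jacobiArea.continuousAt.comp c_fst) hz.area_pos,
    c_inner.eventually_lt c_mean hz.inner_lt,
    continuous_angMom.abs.continuousAt.eventually_lt continuousAt_const hz.angMom_lt,
    (c_major.const_mul _).eventually_lt (c_minor.const_mul _) hz.weight_lt,
    continuousAt_const.eventually_lt
      ((continuousAt_tiltStiffness hν₂ h_area hz.q3_pos.ne').comp c_fst) hz.tilt_pos,
    c_curv.eventually_lt
      ((continuousAt_shearStiffness hν₁ hν₂ h_area hz.q3_pos.ne').comp c_fst) hz.shear_lt]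
    with w h_q0 h_q3 h_area h_inner h_angMom h_weight h_tilt h_shear
  exact ⟨h_q0, h_q3, h_area, h_inner, h_angMom, h_weight, h_tilt, h_shear⟩

lemma InMinorantRegion.le_Hred (hm : 0 < m) (hm₁ : 0 ≤ m₁) (hν₁ : 0 < ν₁) (hν₂ : 0 < ν₂)
    (h₂ : 0 ≤ μ₂) (h : IsIsoscelesEquilibrium m m₁ ν₁ ν₂ μ₁ μ₂ q₁ q₄)
    (hz : InMinorantRegion m m₁ ν₁ ν₂ μ₁ μ₂ z) :
    kinetic ν₁ ν₂ z.2 + keplerEnergy μ₂ ν₁ q₁ √(jacobiGram z.1 0) +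
        keplerEnergy μ₁ ν₂ q₄ √(jacobiGram z.1 1) + tiltStiffness ν₁ ν₂ μ₁ μ₂ z.1 * z.1 2 ^ 2 +
        (shearStiffness ν₁ ν₂ μ₁ μ₂ z.1 -
            m * m₁ / (meanSqDist (jacobiGram z.1) ^ 2 * √(meanSqDist (jacobiGram z.1)))) *
          jacobiGram z.1 2 ^ 2 ≤
      Hred ν₁ ν₂ μ₁ μ₂ (Vnewt m₁ m m) z := by
  obtain ⟨e₁, e₄⟩ := (isIsoscelesEquilibrium_iff h.pos₁ h.pos₄).mp h
  have hN := doubleLeg_pos q₁ h.pos₄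
  have h₁₂ : μ₂ ≤ μ₁ := sub_nonneg.mp ((abs_nonneg _).trans hz.angMom_lt.le)
  have h_area : jacobiArea z.1 ≠ 0 := hz.area_pos.ne'
  obtain ⟨hs₀, hs₁⟩ := jacobiGram_pos_of_jacobiArea_ne_zero h_area
  have h_rotation := centrifugal_zero_le hν₁.le hν₂.le h₂ hz.angMom_lt hz.weight_lt.le
  have h_split := le_centrifugal_zero hν₁ hν₂ h₂ h₁₂ h_area hz.q3_pos.ne'
  have h_weights : (q₁ / doubleLeg q₁ q₄) ^ 2 + (2 * q₄ / doubleLeg q₁ q₄) ^ 2 = 1 := by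
    rw [div_pow, div_pow, ← add_div, div_eq_one_iff_eq (by positivity), doubleLeg_sq]
    ring
  have h_potential := le_Vnewt_equal_masses hm hm₁ (div_pos h.pos₁ hN)
    (div_pos (mul_pos two_pos h.pos₄) hN) h_weights hs₀ hs₁ hz.inner_lt.le
  rw [e₁, e₄] at h_potential
  rw [Hred_eq, keplerEnergy, keplerEnergy, Real.sq_sqrt hs₀.le, Real.sq_sqrt hs₁.le,
    ← div_div _ (ν₁ * q₁), ← div_div _ (ν₂ * q₄)]
  linarith

lemma tiltStiffness_isoscelesPoint_pos (hν₁ : 0 < ν₁) (hν₂ : 0 < ν₂) (h₂ : 0 ≤ μ₂) (h₁₂ : μ₂ < μ₁)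
    (hq₁ : 0 < q₁) (h_ratio : q₁ ≤ q₄) (h_reduced : 2 * ν₁ * q₁ < ν₂ * q₄) :
    0 < tiltStiffness ν₁ ν₂ μ₁ μ₂ (isoscelesPoint q₁ q₄).1 := by
  have hq₄ := hq₁.trans_le h_ratio
  have hD : 0 < μ₁ ^ 2 - μ₂ ^ 2 := sub_pos.mpr (pow_lt_pow_left₀ h₁₂ h₂ two_ne_zero)
  have h_tilt : q₁ ^ 2 / (ν₂ * q₄ ^ 2) < 1 / (2 * ν₁) := by
    rw [div_lt_div_iff₀ (by positivity) (by positivity)]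
    calc q₁ ^ 2 * (2 * ν₁) = 2 * ν₁ * q₁ * q₁ := by ring
      _ < ν₂ * q₄ * q₁ := by gcongr
      _ ≤ ν₂ * q₄ * q₄ := by gcongr
      _ = 1 * (ν₂ * q₄ ^ 2) := by ring
  have := sub_pos.mpr h_tilt
  simp only [tiltStiffness, jacobiArea, isoscelesPoint, Matrix.cons_val, mul_zero, sub_zero]
  positivity

lemma div_meanSqDist_le {k : ℝ} (hk : 0 ≤ k) (hq₁ : 0 < q₁) (h_ratio : q₁ ≤ q₄) :
    k / ((q₁ ^ 2 / 4 + q₄ ^ 2) ^ 2 * √(q₁ ^ 2 / 4 + q₄ ^ 2)) ≤ k / q₄ / (q₁ * q₄) ^ 2 := by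
  have hq₄ := hq₁.trans_le h_ratio
  have h_mean : q₄ ^ 2 ≤ q₁ ^ 2 / 4 + q₄ ^ 2 := le_add_of_nonneg_left (by positivity)
  calc k / ((q₁ ^ 2 / 4 + q₄ ^ 2) ^ 2 * √(q₁ ^ 2 / 4 + q₄ ^ 2))
      ≤ k / ((q₄ ^ 2) ^ 2 * q₄) := by
        gcongr
        exact Real.le_sqrt_of_sq_le h_mean
    _ = k / q₄ / (q₄ * q₄) ^ 2 := by field_simp
    _ ≤ k / q₄ / (q₁ * q₄) ^ 2 := by gcongr

/-- A triangle much taller than wide satisfies every condition of the region, because the force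
along its base then exceeds the force along its height. -/
lemma IsIsoscelesEquilibrium.inMinorantRegion
    (h : IsIsoscelesEquilibrium m m₁ ν₁ ν₂ μ₁ μ₂ q₁ q₄) (hm : 0 < m) (hm₁ : 0 ≤ m₁)
    (hν₁ : 0 < ν₁) (hν₂ : 0 < ν₂) (h₂ : 0 ≤ μ₂) (h₁₂ : μ₂ < μ₁) (h_ratio : q₁ ≤ q₄)
    (h_mass : 8 * m₁ * q₁ < m * q₄) (h_reduced : 2 * ν₁ * q₁ < ν₂ * q₄) :
    InMinorantRegion m m₁ ν₁ ν₂ μ₁ μ₂ (isoscelesPoint q₁ q₄) := by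
  have hq₁ := h.pos₁
  have hq₄ := h.pos₄
  have h_tilt := tiltStiffness_isoscelesPoint_pos hν₁ hν₂ h₂ h₁₂ hq₁ h_ratio h_reduced
  have h_nonneg : 0 ≤ m * m₁ / q₄ := by positivity
  have h_outer := h.outer_force_le hm.le hm₁
  have h_inner : 8 * (m * m₁ / q₄) < μ₂ ^ 2 / (ν₁ * q₁ ^ 2) := by
    refine lt_of_lt_of_le ?_ (h.le_inner_force hm.le hm₁)
    rw [← mul_div_assoc, div_lt_div_iff₀ hq₄ hq₁]
    linarith [mul_lt_mul_of_pos_left h_mass hm]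
  constructor <;> simp only [isoscelesPoint, jacobiArea, jacobiGram, angMom, majorWeight,
    minorWeight, shearStiffness, meanSqDist, Matrix.cons_val, Pi.zero_apply,
    mul_zero, zero_mul, add_zero, zero_add, sub_zero, sub_self, abs_zero, zero_div,
    zero_pow two_ne_zero]
  case q0_pos => exact hq₁
  case q3_pos => exact hq₄
  case area_pos => positivity
  case inner_lt => positivity
  case angMom_lt => exact sub_pos.mpr h₁₂
  case weight_lt =>
    have h_force : μ₁ ^ 2 / (ν₂ * q₄ ^ 2) < μ₂ ^ 2 / (ν₁ * q₁ ^ 2) := by linarith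
    calc μ₁ ^ 2 * (q₁ ^ 2 / (2 * ν₂)) = μ₁ ^ 2 / (ν₂ * q₄ ^ 2) * (q₁ ^ 2 * q₄ ^ 2 / 2) := by
          field_simp
      _ < μ₂ ^ 2 / (ν₁ * q₁ ^ 2) * (q₁ ^ 2 * q₄ ^ 2 / 2) := by gcongr
      _ = μ₂ ^ 2 * (q₄ ^ 2 / (2 * ν₁)) := by field_simp
  case tilt_pos => exact h_tilt
  case shear_lt =>
    have h_force : m * m₁ / q₄ <
        μ₂ ^ 2 / (2 * ν₁ * q₁ ^ 2) - (μ₁ ^ 2 - μ₂ ^ 2) / (ν₂ * q₄ ^ 2) := by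
      have h_le : (μ₁ ^ 2 - μ₂ ^ 2) / (ν₂ * q₄ ^ 2) ≤ μ₁ ^ 2 / (ν₂ * q₄ ^ 2) := by
        gcongr
        exact sub_le_self _ (sq_nonneg μ₂)
      rw [mul_assoc, mul_comm 2, ← div_div]
      linarith
    exact (div_meanSqDist_le (mul_nonneg hm.le hm₁) hq₁ h_ratio).trans_lt (by gcongr)

lemma eq_isoscelesPoint (h_q0 : 0 < z.1 0) (h_q3 : 0 < z.1 3)
    (h_q2 : z.1 2 = 0) (h_inner : jacobiGram z.1 2 = 0) (h₀ : √(jacobiGram z.1 0) = q₁)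
    (h₁ : √(jacobiGram z.1 1) = q₄) (hp : z.2 = 0) : z = isoscelesPoint q₁ q₄ := by
  simp only [jacobiGram, Matrix.cons_val, h_q2, mul_zero, zero_add, zero_pow two_ne_zero,
    mul_eq_zero, or_iff_left h_q3.ne'] at h_inner h₀ h₁
  rw [h_inner, zero_pow two_ne_zero, add_zero, Real.sqrt_sq h_q0.le] at h₀
  rw [Real.sqrt_sq h_q3.le] at h₁
  refine Prod.ext (funext fun i ↦ ?_) hp
  fin_cases i
  exacts [h₀, h_inner, h_q2, h₁]

lemma InMinorantRegion.Hred_isoscelesPoint_lt (hm : 0 < m) (hm₁ : 0 ≤ m₁) (hν₁ : 0 < ν₁)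
    (hν₂ : 0 < ν₂) (h₂ : 0 < μ₂) (h : IsIsoscelesEquilibrium m m₁ ν₁ ν₂ μ₁ μ₂ q₁ q₄)
    (hz : InMinorantRegion m m₁ ν₁ ν₂ μ₁ μ₂ z) (hne : z ≠ isoscelesPoint q₁ q₄) :
    Hred ν₁ ν₂ μ₁ μ₂ (Vnewt m₁ m m) (isoscelesPoint q₁ q₄) <
      Hred ν₁ ν₂ μ₁ μ₂ (Vnewt m₁ m m) z := by
  have h₁₂ : μ₂ < μ₁ := sub_pos.mp ((abs_nonneg _).trans_lt hz.angMom_lt)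
  have h_kinetic := kinetic_nonneg hν₁.le hν₂.le z.2
  have h_inner := keplerEnergy_self_le hν₁.le μ₂ q₁ √(jacobiGram z.1 0)
  have h_outer := keplerEnergy_self_le hν₂.le μ₁ q₄ √(jacobiGram z.1 1)
  have h_tilt := mul_nonneg hz.tilt_pos.le (sq_nonneg (z.1 2))
  have h_shear := mul_nonneg (sub_pos.mpr hz.shear_lt).le (sq_nonneg (jacobiGram z.1 2))
  have h_minorant := hz.le_Hred hm hm₁ hν₁ hν₂ h₂.le h
  rw [Hred_isoscelesPoint h hm.ne' h₂.le h₁₂.le]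
  by_contra! h_le
  refine hne (eq_isoscelesPoint hz.q0_pos hz.q3_pos ?_ ?_ ?_ ?_ ?_)
  · have : tiltStiffness ν₁ ν₂ μ₁ μ₂ z.1 * z.1 2 ^ 2 = 0 := by linarith
    simpa [hz.tilt_pos.ne'] using this
  · exact sq_eq_zero_iff.mp
      ((mul_eq_zero.mp (by linarith)).resolve_left (sub_pos.mpr hz.shear_lt).ne')
  · exact eq_of_keplerEnergy_le_self hν₁ h₂.ne' (by linarith)
  · exact eq_of_keplerEnergy_le_self hν₂ (h₂.trans h₁₂).ne' (by linarith)
  · exact eq_zero_of_kinetic_nonpos hν₁ hν₂ (by linarith)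

end Minimum

theorem isosceles_minimum_small_mu2_general (m m₁ ν₁ ν₂ μ₁ : ℝ) (hm : 0 < m) (hm₁ : 0 < m₁)
    (hν₁ : 0 < ν₁) (hν₂ : 0 < ν₂) (hμ₁ : 0 < μ₁) :
    ∃ ε > 0, ∀ μ₂ ∈ Set.Ioo 0 ε, ∃ q₁ q₄, IsIsoscelesEquilibrium m m₁ ν₁ ν₂ μ₁ μ₂ q₁ q₄ ∧
      ∀ᶠ z in 𝓝[≠] isoscelesPoint q₁ q₄,
        Hred ν₁ ν₂ μ₁ μ₂ (Vnewt m₁ m m) (isoscelesPoint q₁ q₄) <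
          Hred ν₁ ν₂ μ₁ μ₂ (Vnewt m₁ m m) z := by
  obtain ⟨ε, hε, h_exists⟩ := exists_isIsoscelesEquilibrium hm hm₁ hν₁ hν₂ hμ₁.ne'
    (τ₁ := min 1 (min (m / (8 * m₁)) (ν₂ / (2 * ν₁)))) (by positivity)
  refine ⟨min ε μ₁, by positivity, fun μ₂ ⟨h₂, h_lt⟩ ↦ ?_⟩
  obtain ⟨h_lt_ε, h₁₂⟩ := lt_min_iff.mp h_lt
  obtain ⟨q₁, q₄, h, h_slender⟩ := h_exists μ₂ ⟨h₂, h_lt_ε⟩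
  rw [← div_lt_iff₀ h.pos₄, lt_min_iff, lt_min_iff, div_lt_one h.pos₄,
    div_lt_div_iff₀ h.pos₄ (by positivity), div_lt_div_iff₀ h.pos₄ (by positivity)] at h_slender
  obtain ⟨h_ratio, h_mass, h_reduced⟩ := h_slender
  have h_region := h.inMinorantRegion hm hm₁.le hν₁ hν₂ h₂.le h₁₂ h_ratio.le (by linarith)
    (by linarith)
  refine ⟨q₁, q₄, h, eventually_nhdsWithin_iff.mpr ?_⟩
  filter_upwards [h_region.eventually hν₁.ne' hν₂.ne'] with z hz hne
  exact hz.Hred_isoscelesPoint_lt hm hm₁.le hν₁ hν₂ h₂ h hne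

/-- For two equal masses `m₂ = m₃ = m` and sufficiently small `μ₂ > 0`, the isosceles
relative equilibrium is a strict local minimum of the fully reduced Hamiltonian. -/
theorem isosceles_minimum_small_mu2 (m m₁ μ₁ : ℝ) (hm : 0 < m) (hm₁ : 0 < m₁)
    (hμ₁ : 0 < μ₁) :
    ∃ ε > 0, ∀ μ₂ : ℝ, μ₂ ∈ Set.Ioo 0 ε →
      ∃ q₁ q₄ : ℝ, 0 < q₁ ∧ 0 < q₄ ∧
        m ^ 2 / q₁ ^ 2 + 4 * m * m₁ * q₁ / (q₁ ^ 2 + 4 * q₄ ^ 2) ^ ((3 : ℝ) / 2) -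
          μ₂ ^ 2 / ((m / 2) * q₁ ^ 3) = 0 ∧
        16 * m * m₁ * q₄ / (q₁ ^ 2 + 4 * q₄ ^ 2) ^ ((3 : ℝ) / 2) -
          μ₁ ^ 2 / ((2 * m * m₁ / (2 * m + m₁)) * q₄ ^ 3) = 0 ∧
        (∀ᶠ z in nhdsWithin ((![q₁, 0, 0, q₄], (0 : Fin 4 → ℝ)))
            {((![q₁, 0, 0, q₄], (0 : Fin 4 → ℝ)))}ᶜ,
          Hred (m / 2) (2 * m * m₁ / (2 * m + m₁)) μ₁ μ₂ (Vnewt m₁ m m)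
              (![q₁, 0, 0, q₄], (0 : Fin 4 → ℝ)) <
            Hred (m / 2) (2 * m * m₁ / (2 * m + m₁)) μ₁ μ₂ (Vnewt m₁ m m) z) := by
  obtain ⟨ε, hε, h⟩ := isosceles_minimum_small_mu2_general m m₁ (m / 2)
    (2 * m * m₁ / (2 * m + m₁)) μ₁ hm hm₁ (by positivity) (by positivity) hμ₁
  refine ⟨ε, hε, fun μ₂ hμ₂ ↦ ?_⟩
  obtain ⟨q₁, q₄, heq, hmin⟩ := h μ₂ hμ₂
  exact ⟨q₁, q₄, heq.pos₁, heq.pos₄, heq.eq₁, heq.eq₄, hmin⟩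

end
end
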